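/- Let (A,Λ) be any associative form ring with 1 and let (I,Γ), (J,Δ), (K,Θ), (L,Ξ) be form ideals of (A,Λ). If either n ≥ 4, or n ≥ 3 and at least one of the four ideals equals its corresponding relative form parameter (as sets), then [[EU(2n,I,Γ), EU(2n,J,Δ)], [EU(2n,K,Θ), EU(2n,L,Ξ)]] = [EU(2n,(I,Γ)∘(J,Δ)), EU(2n,(K,Θ)∘(L,Ξ))]. -/

import Mathlib

open Matrix
open scoped commutatorElement

/-- Bak's form ring data on a ring `A`: an involution `bar`, a central symmetry
`λ` with `λ λ̄ = 1`, and a form parameter `Λ`. -/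
structure FormRingData (A : Type*) [Ring A] where
  bar : A →+ A
  bar_mul : ∀ a b : A, bar (a * b) = bar b * bar a
  bar_bar : ∀ a : A, bar (bar a) = a
  lam : A
  lam_comm : ∀ a : A, lam * a = a * lam
  lam_bar : lam * bar lam = 1
  Lambda : AddSubgroup A
  lambdaMin_mem : ∀ c : A, c - lam * bar c ∈ Lambda
  lambdaMax_mem : ∀ x ∈ Lambda, x = -(lam * bar x)
  lambda_conj : ∀ (c : A), ∀ x ∈ Lambda, c * x * bar c ∈ Lambda

namespace FormRingData

variable {A : Type*} [Ring A]

/-- Integral powers of the symmetry `λ`; negative powers use `λ̄ = λ⁻¹`. -/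
def lpow (D : FormRingData A) (k : ℤ) : A :=
  if 0 ≤ k then D.lam ^ k.toNat else (D.bar D.lam) ^ (-k).toNat

end FormRingData

/-- The index set `Ω = {1,…,n,−n,…,−1}`, coded as `Fin n × Bool`
(second component `true` = positive index). -/
abbrev Idx (n : ℕ) := Fin n × Bool

namespace Idx

/-- The involution `i ↦ −i` on indices. -/
def neg {n : ℕ} (i : Idx n) : Idx n := (i.1, !i.2)

/-- The sign `ε(i) ∈ {±1}`. -/
def eps {n : ℕ} (i : Idx n) : ℤ := if i.2 then 1 else -1

theorem neg_ne {n : ℕ} (i : Idx n) : neg i ≠ i := by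
  simp [neg, Prod.ext_iff]

theorem neg_injective {n : ℕ} : Function.Injective (neg (n := n)) := by
  intro i j h
  simp only [neg, Prod.mk.injEq] at h
  refine Prod.ext h.1 ?_
  have h2 := h.2
  cases hi : i.2 <;> cases hj : j.2 <;> simp_all

theorem neg_neg {n : ℕ} (i : Idx n) : neg (neg i) = i := by
  simp [neg]

end Idx

/-- `GL(2n, A)`, realised as the units of the `Ω × Ω` matrix ring over `A`. -/
abbrev GLn (A : Type*) [Ring A] (n : ℕ) := (Matrix (Idx n) (Idx n) A)ˣ

section aux

theorem one_add_mul_one_sub {R : Type*} [Ring R] {X : R} (h : X * X = 0) :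
    (1 + X) * (1 - X) = 1 := by
  have hh : (1 + X) * (1 - X) = 1 - X * X := by noncomm_ring
  rw [hh, h, sub_zero]

theorem one_sub_mul_one_add {R : Type*} [Ring R] {X : R} (h : X * X = 0) :
    (1 - X) * (1 + X) = 1 := by
  have hh : (1 - X) * (1 + X) = 1 - X * X := by noncomm_ring
  rw [hh, h, sub_zero]

theorem stdBasisMatrix_neg' {A : Type*} [Ring A] {n : ℕ} (i j : Idx n) (c : A) :
    single i j (-c) = -single i j c := by
  refine eq_neg_of_add_eq_zero_left ?_
  rw [← Matrix.single_add]
  simp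

end aux

namespace FormRingData

variable {A : Type*} [Ring A] {n : ℕ}

/-- The off-diagonal part of a short root element. -/
def Xmat (D : FormRingData A) (i j : Idx n) (c : A) : Matrix (Idx n) (Idx n) A :=
  single i j c -
    single (Idx.neg j) (Idx.neg i) (D.lpow ((Idx.eps j - Idx.eps i) / 2) * D.bar c)

theorem Xmat_mul (D : FormRingData A) {i j : Idx n} (hij : i ≠ j) (c c' : A) :
    D.Xmat i j c * D.Xmat i j c' = 0 := by
  unfold Xmat
  rw [sub_mul, mul_sub, mul_sub,
    Matrix.single_mul_single_of_ne _ _ _ _ (Ne.symm hij),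
    Matrix.single_mul_single_of_ne _ _ _ _ (Ne.symm (Idx.neg_ne j)),
    Matrix.single_mul_single_of_ne _ _ _ _ (Idx.neg_ne i),
    Matrix.single_mul_single_of_ne _ _ _ _ (fun h => hij (Idx.neg_injective h))]
  simp

theorem Xmat_neg (D : FormRingData A) (i j : Idx n) (c : A) :
    D.Xmat i j (-c) = -D.Xmat i j c := by
  unfold Xmat
  rw [map_neg, mul_neg, stdBasisMatrix_neg', stdBasisMatrix_neg']
  abel

/-- The elementary short root unipotent `T_{ij}(c)`, for `i ≠ ±j`
(with junk value `1` when `i = j`). -/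
def TS (D : FormRingData A) (i j : Idx n) (c : A) : GLn A n :=
  if h : i = j then 1 else
    { val := 1 + D.Xmat i j c
      inv := 1 + D.Xmat i j (-c)
      val_inv := by
        rw [D.Xmat_neg, ← sub_eq_add_neg]
        exact one_add_mul_one_sub (D.Xmat_mul h c c)
      inv_val := by
        rw [D.Xmat_neg, ← sub_eq_add_neg]
        exact one_sub_mul_one_add (D.Xmat_mul h c c) }

/-- The elementary long root unipotent `T_{i,−i}(c)`. -/
def TL (D : FormRingData A) (i : Idx n) (c : A) : GLn A n where
  val := 1 + single i (Idx.neg i) c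
  inv := 1 + single i (Idx.neg i) (-c)
  val_inv := by
    rw [stdBasisMatrix_neg', ← sub_eq_add_neg]
    exact one_add_mul_one_sub (Matrix.single_mul_single_of_ne _ _ _ _ (Idx.neg_ne i) _)
  inv_val := by
    rw [stdBasisMatrix_neg', ← sub_eq_add_neg]
    exact one_sub_mul_one_add (Matrix.single_mul_single_of_ne _ _ _ _ (Idx.neg_ne i) _)

/-- The elementary unitary transvection `T_{ij}(c)` (long or short root type
according to whether `j = −i`). -/
def T (D : FormRingData A) (i j : Idx n) (c : A) : GLn A n :=
  if j = Idx.neg i then D.TL i c else D.TS i j c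

/-- The elementary commutator `Y_{ij}(a,b) = [T_{ij}(a), T_{ji}(b)]`. -/
def Y (D : FormRingData A) (i j : Idx n) (a b : A) : GLn A n :=
  ⁅D.T i j a, D.T j i b⁆

/-- The elementary conjugate `Z_{ij}(a,c) = T_{ji}(c) T_{ij}(a) T_{ji}(−c)`. -/
def Z (D : FormRingData A) (i j : Idx n) (a c : A) : GLn A n :=
  D.T j i c * D.T i j a * D.T j i (-c)

/-- The set of elementary unitary transvections of level `(I,Γ)`. -/
def transvGen (D : FormRingData A) (n : ℕ) (I Γ : AddSubgroup A) : Set (GLn A n) :=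
  {x | ∃ i j : Idx n, i ≠ j ∧ i ≠ Idx.neg j ∧ ∃ c ∈ I, x = D.TS i j c} ∪
    {x | ∃ i : Idx n, ∃ g ∈ Γ, x = D.TL i (D.lpow (-(Idx.eps i + 1) / 2) * g)}

/-- The unrelative elementary subgroup `FU(2n, I, Γ)`. -/
def FU (D : FormRingData A) (n : ℕ) (I Γ : AddSubgroup A) : Subgroup (GLn A n) :=
  Subgroup.closure (D.transvGen n I Γ)

/-- The absolute elementary unitary group `EU(2n, A, Λ)`. -/
def EUmax (D : FormRingData A) (n : ℕ) : Subgroup (GLn A n) :=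
  D.FU n ⊤ D.Lambda

/-- The relative elementary subgroup `EU(2n, I, Γ)`: the normal closure of
`FU(2n, I, Γ)` in `EU(2n, A, Λ)`. -/
def EU (D : FormRingData A) (n : ℕ) (I Γ : AddSubgroup A) : Subgroup (GLn A n) :=
  Subgroup.closure {x | ∃ g ∈ D.EUmax n, ∃ t ∈ D.transvGen n I Γ, x = g * t * g⁻¹}

/-- The additive subgroup generated by products `st`, `s ∈ S`, `t ∈ T`. -/
def mulSub (S T : AddSubgroup A) : AddSubgroup A :=
  AddSubgroup.closure {x | ∃ a ∈ S, ∃ b ∈ T, x = a * b}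

/-- The symmetrised product `ST + TS` of two (additive subgroups underlying)
two-sided ideals. -/
def symI (S T : AddSubgroup A) : AddSubgroup A :=
  mulSub S T ⊔ mulSub T S

/-- The minimal relative form parameter `Γ_min(K)` of level `K`. -/
def gammaMin (D : FormRingData A) (K : AddSubgroup A) : AddSubgroup A :=
  AddSubgroup.closure
    ({x | ∃ a ∈ K, x = a - D.lam * D.bar a} ∪
      {x | ∃ a ∈ K, ∃ c ∈ D.Lambda, x = a * c * D.bar a})

/-- The relative form parameter `ˢΓ = ⟨ b γ b̄ ∣ b ∈ S, γ ∈ Γ ⟩`. -/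
def conjPar (D : FormRingData A) (S Γ : AddSubgroup A) : AddSubgroup A :=
  AddSubgroup.closure {x | ∃ b ∈ S, ∃ g ∈ Γ, x = b * g * D.bar b}

/-- The relative form parameter of the symmetrised product
`(I,Γ)∘(J,Δ) = (IJ+JI, Γ_min(IJ+JI) + ᴶΓ + ᴵΔ)`. -/
def symG (D : FormRingData A) (I Γ J Δ : AddSubgroup A) : AddSubgroup A :=
  D.gammaMin (symI I J) ⊔ D.conjPar J Γ ⊔ D.conjPar I Δ

/-- The elementary subgroup `EU(2n, (I,Γ)∘(J,Δ))` of the symmetrised product. -/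
def EUsym (D : FormRingData A) (n : ℕ) (I Γ J Δ : AddSubgroup A) : Subgroup (GLn A n) :=
  D.EU n (symI I J) (D.symG I Γ J Δ)

/-- Position-dependent membership `a ∈ (I,Γ)` at position `(i,j)`:
`a ∈ I` for a short root position, `a ∈ λ^{−(ε(i)+1)/2}Γ` for a long one. -/
def pmem (D : FormRingData A) (I Γ : AddSubgroup A) {n : ℕ} (i j : Idx n) (a : A) : Prop :=
  if j = Idx.neg i then ∃ g ∈ Γ, a = D.lpow (-(Idx.eps i + 1) / 2) * g else a ∈ I

end FormRingData

/-- A form ideal `(I,Γ)` of the form ring `(A,Λ)`. -/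
structure FormIdeal {A : Type*} [Ring A] (D : FormRingData A) where
  I : AddSubgroup A
  Gamma : AddSubgroup A
  mul_mem_left : ∀ (c : A), ∀ x ∈ I, c * x ∈ I
  mul_mem_right : ∀ (c : A), ∀ x ∈ I, x * c ∈ I
  bar_mem : ∀ x ∈ I, D.bar x ∈ I
  gammaMin_le : D.gammaMin I ≤ Gamma
  gamma_le_I : Gamma ≤ I
  gamma_le_Lambda : Gamma ≤ D.Lambda
  gamma_conj : ∀ (c : A), ∀ x ∈ Gamma, c * x * D.bar c ∈ Gamma

namespace FormRingData

variable {A : Type*} [Ring A] {n : ℕ}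

/-- weight factor -/
def w (D : FormRingData A) (i : Idx n) : A := if i.2 then D.bar D.lam else 1

theorem bar_one (D : FormRingData A) : D.bar 1 = 1 := by
  have h := D.bar_mul (D.bar 1) 1
  rw [mul_one, D.bar_bar, mul_one] at h
  exact h.symm

theorem lamb_comm (D : FormRingData A) (a : A) : D.bar D.lam * a = a * D.bar D.lam := by
  have h := congrArg D.bar (D.lam_comm (D.bar a))
  rw [D.bar_mul, D.bar_mul, D.bar_bar] at h
  exact h.symm

theorem lam_bar' (D : FormRingData A) : D.bar D.lam * D.lam = 1 := by
  rw [D.lamb_comm, D.lam_bar]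

theorem w_comm (D : FormRingData A) (i : Idx n) (a : A) : D.w i * a = a * D.w i := by
  unfold w; split_ifs
  · exact D.lamb_comm a
  · simp

theorem bw_comm (D : FormRingData A) (i : Idx n) (a : A) :
    D.bar (D.w i) * a = a * D.bar (D.w i) := by
  unfold w; split_ifs
  · rw [D.bar_bar]; exact D.lam_comm a
  · simp [D.bar_one]

theorem w_bw (D : FormRingData A) (i : Idx n) : D.w i * D.bar (D.w i) = 1 := by
  unfold w; split_ifs
  · rw [D.bar_bar, D.lam_bar']
  · simp [D.bar_one]

theorem bw_w (D : FormRingData A) (i : Idx n) : D.bar (D.w i) * D.w i = 1 := by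
  rw [D.bw_comm, D.w_bw]

theorem bw_eq (D : FormRingData A) (i : Idx n) : D.bar (D.w i) = D.lam * D.w (Idx.neg i) := by
  rcases i with ⟨i, _ | _⟩ <;> simp [w, Idx.neg, D.bar_one, D.bar_bar, D.lam_bar]

theorem w_w (D : FormRingData A) (i : Idx n) : D.lam * (D.w i * D.w (Idx.neg i)) = 1 := by
  rw [← mul_assoc, D.lam_comm, mul_assoc, ← D.bw_eq, D.w_bw]

theorem lpow_w (D : FormRingData A) (i : Idx n) : D.lpow (-(Idx.eps i + 1) / 2) = D.w i := by
  rcases i with ⟨i, _ | _⟩ <;> simp [w, Idx.eps, lpow]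

theorem lpow_ww (D : FormRingData A) (i j : Idx n) :
    D.lpow ((Idx.eps (Idx.neg j) - Idx.eps i) / 2) * D.bar (D.w i) = D.lam * D.w j := by
  rcases i with ⟨i, _ | _⟩ <;> rcases j with ⟨j, _ | _⟩ <;>
    simp [w, Idx.eps, Idx.neg, lpow, D.bar_one, D.bar_bar, D.lam_bar', D.lam_bar]

/-- weighted matrix unit -/
def E (D : FormRingData A) (i j : Idx n) (c : A) : Matrix (Idx n) (Idx n) A :=
  single i (Idx.neg j) (D.w i * c)

theorem E_mul_ne (D : FormRingData A) (i j k l : Idx n) (a b : A) (h : k ≠ Idx.neg j) :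
    D.E i j a * D.E k l b = 0 := by
  unfold E
  rw [Matrix.single_mul_single_of_ne _ _ _ _ (Ne.symm h)]

theorem E_mul (D : FormRingData A) (i j l : Idx n) (a b : A) :
    D.E i j a * D.E (Idx.neg j) l b = D.E i l (D.w (Idx.neg j) * (a * b)) := by
  unfold E
  rw [Matrix.single_mul_single_same]
  congr 1
  rw [mul_assoc, ← mul_assoc a, ← D.w_comm, mul_assoc]

theorem E_mul' (D : FormRingData A) (i j l : Idx n) (a b : A) :
    D.E i (Idx.neg j) a * D.E j l b = D.E i l (D.w j * (a * b)) := by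
  have := D.E_mul i (Idx.neg j) l a b
  rwa [Idx.neg_neg] at this

theorem E_add (D : FormRingData A) (i j : Idx n) (a b : A) :
    D.E i j (a + b) = D.E i j a + D.E i j b := by
  simp [E, mul_add, Matrix.single_add]

theorem E_neg (D : FormRingData A) (i j : Idx n) (a : A) :
    D.E i j (-a) = - D.E i j a := by
  simp [E, stdBasisMatrix_neg']

/-- root element in symmetric notation -/
def xg (D : FormRingData A) (i j : Idx n) (c : A) : GLn A n :=
  if i = j then D.TL i (D.w i * c) else D.TS i (Idx.neg j) (D.w i * c)

theorem xg_long (D : FormRingData A) (i : Idx n) (c : A) :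
    ((D.xg i i c : GLn A n) : Matrix (Idx n) (Idx n) A) = 1 + D.E i i c := by
  simp [xg, TL, E]

theorem xg_short (D : FormRingData A) {i j : Idx n} (h : i ≠ j) (h' : i ≠ Idx.neg j) (c : A) :
    ((D.xg i j c : GLn A n) : Matrix (Idx n) (Idx n) A) =
      1 + (D.E i j c - D.E j i (D.lam * D.bar c)) := by
  simp only [xg, h, TS, h', if_false, dif_neg, not_false_eq_true, Xmat, E, Idx.neg_neg]
  congr 3
  rw [D.bar_mul, ← D.bw_comm, ← mul_assoc, D.lpow_ww, D.lam_comm, mul_assoc]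

end FormRingData
set_option linter.all false
theorem Idx.neg_eq_neg {n : ℕ} {i j : Idx n} : Idx.neg i = Idx.neg j ↔ i = j :=
  Idx.neg_injective.eq_iff

theorem Idx.ne_comm_neg {n : ℕ} {i j : Idx n} (h : i ≠ Idx.neg j) : j ≠ Idx.neg i := by
  intro h'; apply h; rw [h', Idx.neg_neg]

theorem ring_comm_aux {R : Type*} [Ring R] {X Y Z : R} (hZX : Z * X = 0) (hZYX : Z * Y * X = 0)
    (hXY : X * Y = Y * X + Z + Z * Y) : (1 + X) * (1 + Y) = (1 + Z) * (1 + Y) * (1 + X) := by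
  have h1 : (1 + Z) * (1 + Y) * (1 + X) =
      1 + X + Y + (Y * X + Z + Z * Y) + Z * X + Z * Y * X := by noncomm_ring
  rw [h1, ← hXY, hZX, hZYX]; noncomm_ring

namespace FormRingData

variable {A : Type*} [Ring A] {n : ℕ}

theorem xg_add (D : FormRingData A) {i j : Idx n} (h : i ≠ Idx.neg j) (a b : A) :
    D.xg i j (a + b) = D.xg i j a * D.xg i j b := by
  apply Units.ext
  rw [Units.val_mul]
  have hji := Idx.ne_comm_neg h
  by_cases hij : i = j
  · subst hij
    simp only [xg_long, mul_add, add_mul, E_add, D.E_mul_ne _ _ _ _ _ _ h]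
    noncomm_ring
  · simp only [xg_short D hij h, mul_add, add_mul, E_add, map_add, sub_mul, mul_sub,
      D.E_mul_ne _ _ _ _ _ _ h, D.E_mul_ne _ _ _ _ _ _ hji,
      D.E_mul_ne _ _ _ _ _ _ (Ne.symm (Idx.neg_ne _))]
    noncomm_ring

theorem xg_sym (D : FormRingData A) {i j : Idx n} (hij : i ≠ j) (h : i ≠ Idx.neg j) (a : A) :
    D.xg i j a = D.xg j i (-(D.lam * D.bar a)) := by
  apply Units.ext
  rw [xg_short D hij h, xg_short D hij.symm (Idx.ne_comm_neg h)]
  have h2 : D.lam * (a * D.bar D.lam) = a := by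
    rw [← mul_assoc, D.lam_comm, mul_assoc, D.lam_bar, mul_one]
  rw [map_neg, D.bar_mul, D.bar_bar, mul_neg, E_neg, E_neg, h2]
  abel

theorem xg_comm (D : FormRingData A) {i j k l : Idx n} (hij : i ≠ Idx.neg j) (hkl : k ≠ Idx.neg l)
    (h1 : k ≠ Idx.neg i) (h2 : k ≠ Idx.neg j) (h3 : l ≠ Idx.neg i) (h4 : l ≠ Idx.neg j) (a b : A) :
    Commute (D.xg i j a) (D.xg k l b) := by
  apply Units.ext
  rw [Units.val_mul, Units.val_mul]
  have h1' := Idx.ne_comm_neg h1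
  have h2' := Idx.ne_comm_neg h2
  have h3' := Idx.ne_comm_neg h3
  have h4' := Idx.ne_comm_neg h4
  by_cases hij' : i = j <;> by_cases hkl' : k = l
  · subst hij' hkl'
    simp only [xg_long, mul_add, add_mul, E_add, D.E_mul_ne _ _ _ _ _ _ h1,
      D.E_mul_ne _ _ _ _ _ _ h1']
    noncomm_ring
  · subst hij'
    simp only [xg_long, xg_short D hkl' hkl, mul_add, add_mul, mul_sub, sub_mul,
      D.E_mul_ne _ _ _ _ _ _ h1, D.E_mul_ne _ _ _ _ _ _ h1', D.E_mul_ne _ _ _ _ _ _ h3,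
      D.E_mul_ne _ _ _ _ _ _ h3']
    noncomm_ring
  · subst hkl'
    simp only [xg_long, xg_short D hij' hij, mul_add, add_mul, mul_sub, sub_mul,
      D.E_mul_ne _ _ _ _ _ _ h1, D.E_mul_ne _ _ _ _ _ _ h1', D.E_mul_ne _ _ _ _ _ _ h2,
      D.E_mul_ne _ _ _ _ _ _ h2']
    noncomm_ring
  · simp only [xg_short D hkl' hkl, xg_short D hij' hij, mul_add, add_mul, mul_sub, sub_mul,
      D.E_mul_ne _ _ _ _ _ _ h1, D.E_mul_ne _ _ _ _ _ _ h1', D.E_mul_ne _ _ _ _ _ _ h2,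
      D.E_mul_ne _ _ _ _ _ _ h2', D.E_mul_ne _ _ _ _ _ _ h3, D.E_mul_ne _ _ _ _ _ _ h3',
      D.E_mul_ne _ _ _ _ _ _ h4, D.E_mul_ne _ _ _ _ _ _ h4']
    noncomm_ring

/-- structure constant -/
theorem const_aux (D : FormRingData A) (j : Idx n) (a b : A) :
    D.w j * ((D.lam * D.bar b) * (D.lam * D.bar a)) =
      D.lam * D.bar (D.w (Idx.neg j) * (a * b)) := by
  rw [D.bar_mul, D.bar_mul, ← D.bw_comm, D.bw_eq, Idx.neg_neg]
  calc _ = (D.w j * (D.lam * (D.bar b * D.lam))) * D.bar a := by noncomm_ring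
    _ = (D.w j * (D.lam * D.lam)) * (D.bar b * D.bar a) := by
      rw [← D.lam_comm (D.bar b)]; noncomm_ring
    _ = _ := by rw [D.w_comm]; noncomm_ring

theorem xg_r3 (D : FormRingData A) {i j l : Idx n} (h1 : i ≠ j) (h1' : i ≠ Idx.neg j)
    (h2 : l ≠ j) (h2' : l ≠ Idx.neg j) (h3 : i ≠ l) (h3' : i ≠ Idx.neg l) (a b : A) :
    ⁅D.xg i j a, D.xg (Idx.neg j) l b⁆ = D.xg i l (D.w (Idx.neg j) * (a * b)) := by
  have e1 : Idx.neg j ≠ l := fun h => h2' h.symm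
  have e2 : Idx.neg j ≠ Idx.neg l := fun h => h2 (Idx.neg_injective h).symm
  have f1 := Idx.ne_comm_neg h1'
  have f2 := Idx.ne_comm_neg h2'
  have f3 := Idx.ne_comm_neg h3'
  have g1 : i ≠ Idx.neg (Idx.neg j) := by rwa [Idx.neg_neg]
  have g2 : l ≠ Idx.neg (Idx.neg j) := by rwa [Idx.neg_neg]
  have g3 : j ≠ Idx.neg (Idx.neg l) := by rw [Idx.neg_neg]; exact h2.symm
  have g4 : Idx.neg j ≠ Idx.neg i := fun h => h1 (Idx.neg_injective h).symm
  have g5 := Idx.neg_ne j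
  have g6 : j ≠ Idx.neg j := g5.symm
  have g7 : i ≠ Idx.neg i := (Idx.neg_ne i).symm
  have g8 : l ≠ Idx.neg l := (Idx.neg_ne l).symm
  rw [commutatorElement_def, mul_inv_eq_iff_eq_mul, mul_inv_eq_iff_eq_mul]
  apply Units.ext
  simp only [Units.val_mul, xg_short D h1 h1', xg_short D e1 e2, xg_short D h3 h3']
  have hXY : (D.E i j a - D.E j i (D.lam * D.bar a)) *
      (D.E (Idx.neg j) l b - D.E l (Idx.neg j) (D.lam * D.bar b)) =
      D.E i l (D.w (Idx.neg j) * (a * b)) := by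
    simp [mul_sub, sub_mul, E_mul, E_mul', E_mul_ne, *]
  have hYX : (D.E (Idx.neg j) l b - D.E l (Idx.neg j) (D.lam * D.bar b)) *
      (D.E i j a - D.E j i (D.lam * D.bar a)) =
      D.E l i (D.w j * ((D.lam * D.bar b) * (D.lam * D.bar a))) := by
    simp [mul_sub, sub_mul, E_mul, E_mul', E_mul_ne, *]
  rw [D.const_aux] at hYX
  have hZY : (D.E i l (D.w (Idx.neg j) * (a * b)) -
      D.E l i (D.lam * D.bar (D.w (Idx.neg j) * (a * b)))) *
      (D.E (Idx.neg j) l b - D.E l (Idx.neg j) (D.lam * D.bar b)) = 0 := by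
    simp [mul_sub, sub_mul, E_mul, E_mul', E_mul_ne, *]
  apply ring_comm_aux
  · simp [mul_sub, sub_mul, E_mul, E_mul', E_mul_ne, *]
  · rw [hZY, zero_mul]
  · rw [hXY, hYX, hZY]; abel

theorem xg_r4 (D : FormRingData A) {i j : Idx n} (h1 : i ≠ j) (h1' : i ≠ Idx.neg j)
    (a b : A) :
    ⁅D.xg i j a, D.xg (Idx.neg j) i b⁆ = D.xg i i (D.w (Idx.neg j) * (a * b) -
      D.lam * D.bar (D.w (Idx.neg j) * (a * b))) := by
  have e1 : Idx.neg j ≠ i := fun h => h1' h.symm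
  have e2 : Idx.neg j ≠ Idx.neg i := fun h => h1 (Idx.neg_injective h).symm
  have f1 := Idx.ne_comm_neg h1'
  have g1 : i ≠ Idx.neg (Idx.neg j) := by rwa [Idx.neg_neg]
  have g5 := Idx.neg_ne j
  have g6 : j ≠ Idx.neg j := g5.symm
  have g7 : i ≠ Idx.neg i := (Idx.neg_ne i).symm
  rw [commutatorElement_def, mul_inv_eq_iff_eq_mul, mul_inv_eq_iff_eq_mul]
  apply Units.ext
  simp only [Units.val_mul, xg_short D h1 h1', xg_short D e1 e2, xg_long]
  have hXY : (D.E i j a - D.E j i (D.lam * D.bar a)) *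
      (D.E (Idx.neg j) i b - D.E i (Idx.neg j) (D.lam * D.bar b)) =
      D.E i i (D.w (Idx.neg j) * (a * b)) := by
    simp [mul_sub, sub_mul, E_mul, E_mul', E_mul_ne, *]
  have hYX : (D.E (Idx.neg j) i b - D.E i (Idx.neg j) (D.lam * D.bar b)) *
      (D.E i j a - D.E j i (D.lam * D.bar a)) =
      D.E i i (D.w j * ((D.lam * D.bar b) * (D.lam * D.bar a))) := by
    simp [mul_sub, sub_mul, E_mul, E_mul', E_mul_ne, *]
  rw [D.const_aux] at hYX
  have hZY : (D.E i i (D.w (Idx.neg j) * (a * b) -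
      D.lam * D.bar (D.w (Idx.neg j) * (a * b)))) *
      (D.E (Idx.neg j) i b - D.E i (Idx.neg j) (D.lam * D.bar b)) = 0 := by
    simp [mul_sub, E_mul, E_mul', E_mul_ne, *]
  apply ring_comm_aux
  · simp [mul_sub, E_mul, E_mul', E_mul_ne, *]
  · rw [hZY, zero_mul]
  · rw [hXY, hYX, hZY, sub_eq_add_neg, E_add, E_neg]; abel

theorem xg_r5 (D : FormRingData A) {j l : Idx n} (h1 : l ≠ j) (h1' : l ≠ Idx.neg j)
    (g b : A) (hg : g ∈ D.Lambda) :
    ⁅D.xg j j g, D.xg (Idx.neg j) l b⁆ = D.xg j l (D.w (Idx.neg j) * (g * b)) *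
      D.xg l l (-(D.bar b * g * b)) := by
  have e1 : Idx.neg j ≠ l := fun h => h1' h.symm
  have e2 : Idx.neg j ≠ Idx.neg l := fun h => h1 (Idx.neg_injective h).symm
  have f1 := Idx.ne_comm_neg h1'
  have g1 : l ≠ Idx.neg (Idx.neg j) := by rwa [Idx.neg_neg]
  have g5 := Idx.neg_ne j
  have g6 : j ≠ Idx.neg j := g5.symm
  have g7 : l ≠ Idx.neg l := (Idx.neg_ne l).symm
  rw [commutatorElement_def, mul_inv_eq_iff_eq_mul, mul_inv_eq_iff_eq_mul]
  apply Units.ext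
  simp only [Units.val_mul, xg_short D e1 e2, xg_short D h1.symm f1, xg_long]
  have hXY : (D.E j j g) *
      (D.E (Idx.neg j) l b - D.E l (Idx.neg j) (D.lam * D.bar b)) =
      D.E j l (D.w (Idx.neg j) * (g * b)) := by
    simp [mul_sub, E_mul, E_mul', E_mul_ne, *]
  have hc : D.lam * D.bar (D.w (Idx.neg j) * (g * b)) = -(D.w j * ((D.lam * D.bar b) * g)) := by
    rw [← D.const_aux]
    have hgl := D.lambdaMax_mem g hg
    nth_rewrite 2 [hgl]
    simp only [mul_neg, _root_.neg_neg]
  have hYX : (D.E (Idx.neg j) l b - D.E l (Idx.neg j) (D.lam * D.bar b)) *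
      (D.E j j g) = D.E l j (D.lam * D.bar (D.w (Idx.neg j) * (g * b))) := by
    rw [hc]
    simp [sub_mul, E_mul', E_mul_ne, E_neg, *]
  have hZZ : (1 + (D.E j l (D.w (Idx.neg j) * (g * b)) -
      D.E l j (D.lam * D.bar (D.w (Idx.neg j) * (g * b))))) * (1 + D.E l l (-(D.bar b * g * b))) =
      1 + (D.E j l (D.w (Idx.neg j) * (g * b)) -
      D.E l j (D.lam * D.bar (D.w (Idx.neg j) * (g * b))) + D.E l l (-(D.bar b * g * b))) := by
    simp [mul_add, add_mul, sub_mul, E_mul_ne, *]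
    abel
  have hZX : (D.E j l (D.w (Idx.neg j) * (g * b)) -
      D.E l j (D.lam * D.bar (D.w (Idx.neg j) * (g * b))) + D.E l l (-(D.bar b * g * b))) *
      D.E j j g = 0 := by
    simp [add_mul, sub_mul, E_mul_ne, *]
  have hZY : (D.E j l (D.w (Idx.neg j) * (g * b)) -
      D.E l j (D.lam * D.bar (D.w (Idx.neg j) * (g * b))) + D.E l l (-(D.bar b * g * b))) *
      (D.E (Idx.neg j) l b - D.E l (Idx.neg j) (D.lam * D.bar b)) = D.E l l (D.bar b * g * b) := by
    rw [hc, E_neg]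
    simp only [mul_sub, add_mul, sub_mul, E_mul_ne _ _ _ _ _ _ _ g7, E_mul_ne _ _ _ _ _ _ _ e2,
      E_mul_ne _ _ _ _ _ _ _ h1', neg_mul, E_mul]
    have : D.w (Idx.neg j) * (D.w j * (D.lam * D.bar b * g) * b) = D.bar b * g * b := by
      have := D.w_w (Idx.neg j)
      rw [Idx.neg_neg] at this
      calc _ = (D.w (Idx.neg j) * D.w j * D.lam) * (D.bar b * g * b) := by noncomm_ring
        _ = _ := by rw [← D.lam_comm, this, one_mul]
    rw [this]; abel
  rw [hZZ]
  apply ring_comm_aux hZX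
  · rw [hZY]; simp [E_mul_ne, *]
  · rw [hXY, hYX, hZY, E_neg]; abel

end FormRingData
namespace FormRingData

variable {A : Type*} [Ring A]

theorem symI_le (S T K : AddSubgroup A)
    (h1 : ∀ a ∈ S, ∀ b ∈ T, a * b ∈ K) (h2 : ∀ a ∈ S, ∀ b ∈ T, b * a ∈ K) : symI S T ≤ K := by
  unfold symI mulSub
  rw [sup_le_iff, AddSubgroup.closure_le, AddSubgroup.closure_le]
  constructor
  · rintro x ⟨a, ha, b, hb, rfl⟩; exact h1 a ha b hb
  · rintro x ⟨a, ha, b, hb, rfl⟩; exact h2 b hb a ha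

theorem mem_symI_left {S T : AddSubgroup A} {a b : A} (ha : a ∈ S) (hb : b ∈ T) :
    a * b ∈ symI S T :=
  AddSubgroup.mem_sup_left (AddSubgroup.subset_closure ⟨a, ha, b, hb, rfl⟩)

theorem mem_symI_right {S T : AddSubgroup A} {a b : A} (ha : a ∈ S) (hb : b ∈ T) :
    b * a ∈ symI S T :=
  AddSubgroup.mem_sup_right (AddSubgroup.subset_closure ⟨b, hb, a, ha, rfl⟩)

theorem gammaMin_le_iff (D : FormRingData A) (K G : AddSubgroup A) : D.gammaMin K ≤ G ↔
    (∀ a ∈ K, a - D.lam * D.bar a ∈ G) ∧ (∀ a ∈ K, ∀ c ∈ D.Lambda, a * c * D.bar a ∈ G) := by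
  unfold gammaMin
  rw [AddSubgroup.closure_le]
  constructor
  · intro h
    exact ⟨fun a ha => h (Or.inl ⟨a, ha, rfl⟩), fun a ha c hc => h (Or.inr ⟨a, ha, c, hc, rfl⟩)⟩
  · rintro ⟨h1, h2⟩ x (⟨a, ha, rfl⟩ | ⟨a, ha, c, hc, rfl⟩)
    · exact h1 a ha
    · exact h2 a ha c hc

theorem conjPar_le_iff (D : FormRingData A) (S Γ G : AddSubgroup A) : D.conjPar S Γ ≤ G ↔
    (∀ b ∈ S, ∀ g ∈ Γ, b * g * D.bar b ∈ G) := by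
  unfold conjPar
  rw [AddSubgroup.closure_le]
  constructor
  · intro h b hb g hg
    exact h ⟨b, hb, g, hg, rfl⟩
  · rintro h x ⟨b, hb, g, hg, rfl⟩
    exact h b hb g hg

theorem symG_le_iff (D : FormRingData A) (I Γ J Δ G : AddSubgroup A) : D.symG I Γ J Δ ≤ G ↔
    (∀ a ∈ symI I J, a - D.lam * D.bar a ∈ G) ∧
    (∀ a ∈ symI I J, ∀ c ∈ D.Lambda, a * c * D.bar a ∈ G) ∧
    (∀ b ∈ J, ∀ g ∈ Γ, b * g * D.bar b ∈ G) ∧ (∀ b ∈ I, ∀ g ∈ Δ, b * g * D.bar b ∈ G) := by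
  unfold symG
  rw [sup_le_iff, sup_le_iff, gammaMin_le_iff, conjPar_le_iff, conjPar_le_iff]
  tauto

/-- conjugation as an additive map -/
def conjHom (D : FormRingData A) (c : A) : A →+ A :=
  (AddMonoidHom.mulRight (D.bar c)).comp (AddMonoidHom.mulLeft c)

theorem conjHom_apply (D : FormRingData A) (c x : A) : D.conjHom c x = c * x * D.bar c := rfl

theorem conj_min (D : FormRingData A) (c a : A) :
    c * (a - D.lam * D.bar a) * D.bar c = c * a * D.bar c - D.lam * D.bar (c * a * D.bar c) := by
  rw [D.bar_mul, D.bar_mul, D.bar_bar]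
  have : c * (a - D.lam * D.bar a) * D.bar c =
    c * a * D.bar c - (c * D.lam) * (D.bar a * D.bar c) := by noncomm_ring
  rw [this, ← D.lam_comm]; noncomm_ring

end FormRingData

namespace FormIdeal

variable {A : Type*} [Ring A] {D : FormRingData A}

theorem min_mem (F : FormIdeal D) {a : A} (ha : a ∈ F.I) : a - D.lam * D.bar a ∈ F.Gamma :=
  ((D.gammaMin_le_iff _ _).1 F.gammaMin_le).1 a ha

theorem min_mem' (F : FormIdeal D) {a c : A} (ha : a ∈ F.I) (hc : c ∈ D.Lambda) :
    a * c * D.bar a ∈ F.Gamma :=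
  ((D.gammaMin_le_iff _ _).1 F.gammaMin_le).2 a ha c hc

/-- the unit form ideal -/
def top (D : FormRingData A) : FormIdeal D where
  I := ⊤
  Gamma := D.Lambda
  mul_mem_left := fun _ _ _ => AddSubgroup.mem_top _
  mul_mem_right := fun _ _ _ => AddSubgroup.mem_top _
  bar_mem := fun _ _ => AddSubgroup.mem_top _
  gammaMin_le := by
    rw [D.gammaMin_le_iff]
    exact ⟨fun a _ => D.lambdaMin_mem a, fun a _ c hc => D.lambda_conj a c hc⟩
  gamma_le_I := le_top
  gamma_le_Lambda := le_rfl
  gamma_conj := D.lambda_conj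

/-- the symmetrised product -/
def prod (F G : FormIdeal D) : FormIdeal D where
  I := FormRingData.symI F.I G.I
  Gamma := D.symG F.I F.Gamma G.I G.Gamma
  mul_mem_left := by
    intro c x hx
    have : FormRingData.symI F.I G.I ≤
        (FormRingData.symI F.I G.I).comap (AddMonoidHom.mulLeft c) := by
      apply FormRingData.symI_le
      · intro a ha b hb
        simp only [AddSubgroup.mem_comap, AddMonoidHom.coe_mulLeft, ← mul_assoc]
        exact FormRingData.mem_symI_left (F.mul_mem_left c a ha) hb
      · intro a ha b hb
        simp only [AddSubgroup.mem_comap, AddMonoidHom.coe_mulLeft, ← mul_assoc]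
        exact FormRingData.mem_symI_right ha (G.mul_mem_left c b hb)
    exact this hx
  mul_mem_right := by
    intro c x hx
    have : FormRingData.symI F.I G.I ≤
        (FormRingData.symI F.I G.I).comap (AddMonoidHom.mulRight c) := by
      apply FormRingData.symI_le
      · intro a ha b hb
        simp only [AddSubgroup.mem_comap, AddMonoidHom.mulRight_apply, mul_assoc]
        exact FormRingData.mem_symI_left ha (G.mul_mem_right c b hb)
      · intro a ha b hb
        simp only [AddSubgroup.mem_comap, AddMonoidHom.mulRight_apply, mul_assoc]
        exact FormRingData.mem_symI_right (F.mul_mem_right c a ha) hb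
    exact this hx
  bar_mem := by
    intro x hx
    have : FormRingData.symI F.I G.I ≤ (FormRingData.symI F.I G.I).comap D.bar := by
      apply FormRingData.symI_le
      · intro a ha b hb
        simp only [AddSubgroup.mem_comap, D.bar_mul]
        exact FormRingData.mem_symI_right (F.bar_mem a ha) (G.bar_mem b hb)
      · intro a ha b hb
        simp only [AddSubgroup.mem_comap, D.bar_mul]
        exact FormRingData.mem_symI_left (F.bar_mem a ha) (G.bar_mem b hb)
    exact this hx
  gammaMin_le := le_trans le_sup_left le_sup_left
  gamma_le_I := by
    have hl : ∀ c x, x ∈ FormRingData.symI F.I G.I → c * x ∈ FormRingData.symI F.I G.I := by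
      intro c x hx
      have : FormRingData.symI F.I G.I ≤
          (FormRingData.symI F.I G.I).comap (AddMonoidHom.mulLeft c) := by
        apply FormRingData.symI_le
        · intro a ha b hb
          simp only [AddSubgroup.mem_comap, AddMonoidHom.coe_mulLeft, ← mul_assoc]
          exact FormRingData.mem_symI_left (F.mul_mem_left c a ha) hb
        · intro a ha b hb
          simp only [AddSubgroup.mem_comap, AddMonoidHom.coe_mulLeft, ← mul_assoc]
          exact FormRingData.mem_symI_right ha (G.mul_mem_left c b hb)
      exact this hx
    have hb : FormRingData.symI F.I G.I ≤ (FormRingData.symI F.I G.I).comap D.bar := by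
      apply FormRingData.symI_le
      · intro a ha b hb
        simp only [AddSubgroup.mem_comap, D.bar_mul]
        exact FormRingData.mem_symI_right (F.bar_mem a ha) (G.bar_mem b hb)
      · intro a ha b hb
        simp only [AddSubgroup.mem_comap, D.bar_mul]
        exact FormRingData.mem_symI_left (F.bar_mem a ha) (G.bar_mem b hb)
    rw [D.symG_le_iff]
    refine ⟨fun a ha => sub_mem ha (hl _ _ (hb ha)), fun a ha c hc => hl _ _ (hb ha), ?_, ?_⟩
    · intro b hb g hg
      rw [mul_assoc]
      exact FormRingData.mem_symI_right (F.mul_mem_right _ _ (F.gamma_le_I hg)) hb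
    · intro b hb g hg
      rw [mul_assoc]
      exact FormRingData.mem_symI_left hb (G.mul_mem_right _ _ (G.gamma_le_I hg))
  gamma_le_Lambda := by
    rw [D.symG_le_iff]
    exact ⟨fun a _ => D.lambdaMin_mem a, fun a _ c hc => D.lambda_conj a c hc,
      fun b _ g hg => D.lambda_conj b g (F.gamma_le_Lambda hg),
      fun b _ g hg => D.lambda_conj b g (G.gamma_le_Lambda hg)⟩
  gamma_conj := by
    intro c x hx
    obtain ⟨h1, h2, h3, h4⟩ := (D.symG_le_iff F.I F.Gamma G.I G.Gamma _).1 le_rfl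
    have hl : ∀ x, x ∈ FormRingData.symI F.I G.I → c * x ∈ FormRingData.symI F.I G.I := by
      intro x hx
      have : FormRingData.symI F.I G.I ≤
          (FormRingData.symI F.I G.I).comap (AddMonoidHom.mulLeft c) := by
        apply FormRingData.symI_le
        · intro a ha b hb
          simp only [AddSubgroup.mem_comap, AddMonoidHom.coe_mulLeft, ← mul_assoc]
          exact FormRingData.mem_symI_left (F.mul_mem_left c a ha) hb
        · intro a ha b hb
          simp only [AddSubgroup.mem_comap, AddMonoidHom.coe_mulLeft, ← mul_assoc]
          exact FormRingData.mem_symI_right ha (G.mul_mem_left c b hb)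
      exact this hx
    have hr : ∀ d x, x ∈ FormRingData.symI F.I G.I → x * d ∈ FormRingData.symI F.I G.I := by
      intro d x hx
      have : FormRingData.symI F.I G.I ≤
          (FormRingData.symI F.I G.I).comap (AddMonoidHom.mulRight d) := by
        apply FormRingData.symI_le
        · intro a ha b hb
          simp only [AddSubgroup.mem_comap, AddMonoidHom.mulRight_apply, mul_assoc]
          exact FormRingData.mem_symI_left ha (G.mul_mem_right d b hb)
        · intro a ha b hb
          simp only [AddSubgroup.mem_comap, AddMonoidHom.mulRight_apply, mul_assoc]
          exact FormRingData.mem_symI_right (F.mul_mem_right d a ha) hb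
      exact this hx
    have key : ∀ b g, c * (b * g * D.bar b) * D.bar c = (c * b) * g * D.bar (c * b) := by
      intro b g; rw [D.bar_mul]; noncomm_ring
    have : D.symG F.I F.Gamma G.I G.Gamma ≤
        (D.symG F.I F.Gamma G.I G.Gamma).comap (D.conjHom c) := by
      rw [D.symG_le_iff]
      simp only [AddSubgroup.mem_comap, D.conjHom_apply, D.conj_min, key]
      exact ⟨fun a ha => h1 _ (hr _ _ (hl _ ha)), fun a ha d hd => h2 _ (hl _ ha) _ hd,
        fun b hb g hg => h3 _ (G.mul_mem_left _ _ hb) _ hg,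
        fun b hb g hg => h4 _ (F.mul_mem_left _ _ hb) _ hg⟩
    exact this hx

/-- `H` contains the product of `F` and `G`. -/
structure ProdLe (F G H : FormIdeal D) : Prop where
  m1 : ∀ a ∈ F.I, ∀ b ∈ G.I, a * b ∈ H.I
  m2 : ∀ a ∈ F.I, ∀ b ∈ G.I, b * a ∈ H.I
  c1 : ∀ b ∈ G.I, ∀ g ∈ F.Gamma, b * g * D.bar b ∈ H.Gamma
  c2 : ∀ a ∈ F.I, ∀ g ∈ G.Gamma, a * g * D.bar a ∈ H.Gamma

theorem prodLe_prod (F G : FormIdeal D) : ProdLe F G (prod F G) where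
  m1 := fun _ ha _ hb => FormRingData.mem_symI_left ha hb
  m2 := fun _ ha _ hb => FormRingData.mem_symI_right ha hb
  c1 := ((D.symG_le_iff _ _ _ _ _).1 le_rfl).2.2.1
  c2 := ((D.symG_le_iff _ _ _ _ _).1 le_rfl).2.2.2

theorem prodLe_top (F : FormIdeal D) : ProdLe (top D) F F where
  m1 := fun a _ b hb => F.mul_mem_left a b hb
  m2 := fun a _ b hb => F.mul_mem_right a b hb
  c1 := fun _ hb _ hg => F.min_mem' hb hg
  c2 := fun a _ g hg => F.gamma_conj a g hg

theorem ProdLe.symm {F G H : FormIdeal D} (h : ProdLe F G H) : ProdLe G F H :=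
  ⟨fun a ha b hb => h.m2 b hb a ha, fun a ha b hb => h.m1 b hb a ha, h.c2, h.c1⟩

/-- membership at a position -/
def lev {n : ℕ} (F : FormIdeal D) (i j : Idx n) (a : A) : Prop :=
  if i = j then a ∈ F.Gamma else a ∈ F.I

theorem lev_long {n : ℕ} (F : FormIdeal D) (i : Idx n) (a : A) : F.lev i i a ↔ a ∈ F.Gamma := by
  simp [lev]

theorem lev_short {n : ℕ} (F : FormIdeal D) {i j : Idx n} (h : i ≠ j) (a : A) :
    F.lev i j a ↔ a ∈ F.I := by
  simp [lev, h]

theorem lev_mem {n : ℕ} (F : FormIdeal D) {i j : Idx n} {a : A} (h : F.lev i j a) : a ∈ F.I := by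
  unfold lev at h; split_ifs at h
  · exact F.gamma_le_I h
  · exact h

theorem lev_neg {n : ℕ} (F : FormIdeal D) {i j : Idx n} {a : A} (h : F.lev i j a) :
    F.lev i j (-a) := by
  unfold lev at *; split_ifs at * <;> exact neg_mem h

theorem lev_top {n : ℕ} (F : FormIdeal D) {i j : Idx n} {a : A} (h : F.lev i j a) :
    (top D).lev i j a := by
  unfold lev at *; split_ifs at *
  · exact F.gamma_le_Lambda h
  · exact AddSubgroup.mem_top _

theorem lev_top_short {n : ℕ} {i j : Idx n} (h : i ≠ j) (a : A) : (top D).lev i j a := by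
  rw [lev_short _ h]; exact AddSubgroup.mem_top _

end FormIdeal
/-- Steinberg relations for a family of root elements generating a group. -/
structure St {A : Type*} [Ring A] (D : FormRingData A) (n : ℕ) {H : Type*} [Group H]
    (x : Idx n → Idx n → A → H) : Prop where
  gen : Subgroup.closure {h | ∃ i j a, i ≠ Idx.neg j ∧ (FormIdeal.top D).lev i j a ∧
    h = x i j a} = ⊤
  add : ∀ {i j : Idx n}, i ≠ Idx.neg j → ∀ a b, (FormIdeal.top D).lev i j a →
    (FormIdeal.top D).lev i j b → x i j (a + b) = x i j a * x i j b
  sym : ∀ {i j : Idx n}, i ≠ j → i ≠ Idx.neg j → ∀ a, x i j a = x j i (-(D.lam * D.bar a))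
  comm : ∀ {i j k l : Idx n}, i ≠ Idx.neg j → k ≠ Idx.neg l → k ≠ Idx.neg i → k ≠ Idx.neg j →
    l ≠ Idx.neg i → l ≠ Idx.neg j → ∀ a b, (FormIdeal.top D).lev i j a →
    (FormIdeal.top D).lev k l b → Commute (x i j a) (x k l b)
  r3 : ∀ {i j l : Idx n}, i ≠ j → i ≠ Idx.neg j → l ≠ j → l ≠ Idx.neg j → i ≠ l →
    i ≠ Idx.neg l → ∀ a b, ⁅x i j a, x (Idx.neg j) l b⁆ = x i l (D.w (Idx.neg j) * (a * b))
  r4 : ∀ {i j : Idx n}, i ≠ j → i ≠ Idx.neg j → ∀ a b,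
    ⁅x i j a, x (Idx.neg j) i b⁆ = x i i (D.w (Idx.neg j) * (a * b) -
      D.lam * D.bar (D.w (Idx.neg j) * (a * b)))
  r5 : ∀ {j l : Idx n}, l ≠ j → l ≠ Idx.neg j → ∀ g b, g ∈ D.Lambda →
    ⁅x j j g, x (Idx.neg j) l b⁆ = x j l (D.w (Idx.neg j) * (g * b)) *
      x l l (-(D.bar b * g * b))

namespace St

variable {A : Type*} [Ring A] {D : FormRingData A} {n : ℕ} {H : Type*} [Group H]
  {x : Idx n → Idx n → A → H}

/-- odd functions on indices -/
def Odd' (φ : Idx n → ℤ) : Prop := ∀ i, φ (Idx.neg i) = - φ i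

/-- opposite roots -/
def Opp (i j k l : Idx n) : Prop :=
  (k = Idx.neg i ∧ l = Idx.neg j) ∨ (k = Idx.neg j ∧ l = Idx.neg i)

/-- generators of level `F` -/
def gens (x : Idx n → Idx n → A → H) (F : FormIdeal D) : Set H :=
  {h | ∃ i j a, i ≠ Idx.neg j ∧ F.lev i j a ∧ h = x i j a}

/-- relative elementary group -/
def EE (x : Idx n → Idx n → A → H) (F : FormIdeal D) : Subgroup H :=
  Subgroup.normalClosure (gens x F)

/-- unrelative elementary group -/
def FF (x : Idx n → Idx n → A → H) (F : FormIdeal D) : Subgroup H :=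
  Subgroup.closure (gens x F)

instance (x : Idx n → Idx n → A → H) (F : FormIdeal D) : (EE x F).Normal :=
  Subgroup.normalClosure_normal

/-- half space group -/
def V (x : Idx n → Idx n → A → H) (φ : Idx n → ℤ) (F : FormIdeal D) : Subgroup H :=
  Subgroup.closure {h | ∃ i j a, i ≠ Idx.neg j ∧ F.lev i j a ∧ 0 < φ i + φ j ∧ h = x i j a}

theorem zero (S : St D n x) {i j : Idx n} (h : i ≠ Idx.neg j) : x i j 0 = 1 := by
  have h0 : (FormIdeal.top D).lev i j 0 := by
    unfold FormIdeal.lev; split_ifs <;> exact zero_mem _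
  have := S.add h 0 0 h0 h0
  rw [add_zero] at this
  exact (mul_eq_left.1 this.symm)

theorem inv (S : St D n x) {F : FormIdeal D} {i j : Idx n} (h : i ≠ Idx.neg j) {a : A}
    (ha : F.lev i j a) : (x i j a)⁻¹ = x i j (-a) := by
  rw [inv_eq_iff_mul_eq_one, ← S.add h _ _ (F.lev_top ha) (F.lev_top (F.lev_neg ha)), add_neg_cancel, S.zero h]

theorem swap (S : St D n x) (F : FormIdeal D) {i j : Idx n} (h : i ≠ Idx.neg j) {a : A}
    (ha : F.lev i j a) : ∃ a', F.lev j i a' ∧ x i j a = x j i a' := by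
  by_cases hij : i = j
  · subst hij; exact ⟨a, ha, rfl⟩
  · refine ⟨_, ?_, S.sym hij h a⟩
    rw [F.lev_short hij] at ha
    rw [F.lev_short (Ne.symm hij)]
    exact neg_mem (F.mul_mem_left _ _ (F.bar_mem _ ha))

/-- generators appearing in the Chevalley commutator formula -/
def chevSet (x : Idx n → Idx n → A → H) (K : FormIdeal D) (i j k l : Idx n) : Set H :=
  {h | ∃ p q c, p ≠ Idx.neg q ∧ K.lev p q c ∧ (∃ s t : ℤ, 0 < s ∧ 0 < t ∧
    ∀ φ : Idx n → ℤ, Odd' φ → φ p + φ q = s * (φ i + φ j) + t * (φ k + φ l)) ∧ h = x p q c}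

theorem chevSet_swap1 (K : FormIdeal D) (i j k l : Idx n) :
    chevSet x K i j k l = chevSet x K j i k l := by
  unfold chevSet
  ext h
  simp only [add_comm]

theorem chevSet_swap2 (K : FormIdeal D) (i j k l : Idx n) :
    chevSet x K i j k l = chevSet x K i j l k := by
  unfold chevSet
  ext h
  simp only [add_comm]

theorem chev_core (S : St D n x) {F G K : FormIdeal D} (hP : F.ProdLe G K) {i j l : Idx n}
    {a b : A} (hij : i ≠ Idx.neg j) (hjl : Idx.neg j ≠ Idx.neg l) (ha : F.lev i j a)
    (hb : G.lev (Idx.neg j) l b) (hli : l ≠ Idx.neg i) :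
    ⁅x i j a, x (Idx.neg j) l b⁆ ∈ Subgroup.closure (chevSet x K i j (Idx.neg j) l) := by
  have hlj : l ≠ j := fun h => hjl (by rw [h])
  by_cases h1 : i = j
  · subst h1
    have e2 : i ≠ Idx.neg l := Idx.ne_comm_neg hli
    rw [F.lev_long] at ha
    rw [G.lev_short (Ne.symm hli)] at hb
    rw [S.r5 hlj hli a b (F.gamma_le_Lambda ha)]
    apply Subgroup.mul_mem
    · apply Subgroup.subset_closure
      refine ⟨i, l, _, e2, ?_, ⟨1, 1, by norm_num, by norm_num, ?_⟩, rfl⟩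
      · rw [K.lev_short hlj.symm]
        exact K.mul_mem_left _ _ (hP.m1 _ (F.gamma_le_I ha) _ hb)
      · intro φ hφ; rw [hφ]; ring
    · apply Subgroup.subset_closure
      refine ⟨l, l, _, (Idx.neg_ne l).symm, ?_, ⟨1, 2, by norm_num, by norm_num, ?_⟩, rfl⟩
      · rw [K.lev_long]
        apply neg_mem
        have := hP.c1 _ (G.bar_mem _ hb) _ ha
        rwa [D.bar_bar] at this
      · intro φ hφ; rw [hφ]; ring
  by_cases h2 : l = Idx.neg j
  · subst h2
    rw [G.lev_long] at hb
    obtain ⟨a', ha', hxa⟩ := S.swap F hij ha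
    rw [hxa]
    rw [F.lev_short (Ne.symm h1)] at ha'
    rw [← commutatorElement_inv]
    apply Subgroup.inv_mem
    have key := S.r5 (j := Idx.neg j) (l := i) hij (by rwa [Idx.neg_neg]) b a'
      (G.gamma_le_Lambda hb)
    rw [Idx.neg_neg] at key
    rw [key]
    apply Subgroup.mul_mem
    · apply Subgroup.subset_closure
      refine ⟨Idx.neg j, i, _, hli, ?_, ⟨1, 1, by norm_num, by norm_num, ?_⟩, rfl⟩
      · rw [K.lev_short hij.symm]
        exact K.mul_mem_left _ _ (hP.m2 _ ha' _ (G.gamma_le_I hb))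
      · intro φ hφ; rw [hφ]; ring
    · apply Subgroup.subset_closure
      refine ⟨i, i, _, (Idx.neg_ne i).symm, ?_, ⟨2, 1, by norm_num, by norm_num, ?_⟩, rfl⟩
      · rw [K.lev_long]
        apply neg_mem
        have := hP.c2 _ (F.bar_mem _ ha') _ hb
        rwa [D.bar_bar] at this
      · intro φ hφ; rw [hφ]; ring
  rw [F.lev_short h1] at ha
  rw [G.lev_short (Ne.symm h2)] at hb
  by_cases h3 : l = i
  · subst h3
    rw [S.r4 h1 hij]
    apply Subgroup.subset_closure
    refine ⟨l, l, _, hli, ?_, ⟨1, 1, by norm_num, by norm_num, ?_⟩, rfl⟩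
    · rw [K.lev_long]
      exact K.min_mem (K.mul_mem_left _ _ (hP.m1 _ ha _ hb))
    · intro φ hφ; rw [hφ]; ring
  · rw [S.r3 h1 hij hlj h2 (Ne.symm h3) (Idx.ne_comm_neg hli)]
    apply Subgroup.subset_closure
    refine ⟨i, l, _, Idx.ne_comm_neg hli, ?_, ⟨1, 1, by norm_num, by norm_num, ?_⟩, rfl⟩
    · rw [K.lev_short (Ne.symm h3)]
      exact (K.mul_mem_left _ _ (hP.m1 _ ha _ hb))
    · intro φ hφ; rw [hφ]; ring

theorem chev (S : St D n x) {F G K : FormIdeal D} (hP : F.ProdLe G K) {i j k l : Idx n}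
    {a b : A} (hij : i ≠ Idx.neg j) (hkl : k ≠ Idx.neg l) (ha : F.lev i j a)
    (hb : G.lev k l b) (ho : ¬ Opp i j k l) :
    ⁅x i j a, x k l b⁆ ∈ Subgroup.closure (chevSet x K i j k l) := by
  unfold Opp at ho
  by_cases h1 : k = Idx.neg j
  · subst h1
    exact S.chev_core hP hij hkl ha hb (by tauto)
  by_cases h2 : k = Idx.neg i
  · subst h2
    obtain ⟨a', ha', hxa⟩ := S.swap F hij ha
    rw [hxa, chevSet_swap1]
    exact S.chev_core hP (Idx.ne_comm_neg hij) hkl ha' hb (by tauto)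
  by_cases h3 : l = Idx.neg j
  · subst h3
    obtain ⟨b', hb', hxb⟩ := S.swap G hkl hb
    rw [hxb, chevSet_swap2]
    exact S.chev_core hP hij (Idx.ne_comm_neg hkl) ha hb' (by tauto)
  by_cases h4 : l = Idx.neg i
  · subst h4
    obtain ⟨a', ha', hxa⟩ := S.swap F hij ha
    obtain ⟨b', hb', hxb⟩ := S.swap G hkl hb
    rw [hxa, hxb, chevSet_swap1, chevSet_swap2]
    exact S.chev_core hP (Idx.ne_comm_neg hij) (Idx.ne_comm_neg hkl) ha' hb' (by tauto)
  · rw [commutatorElement_eq_one_iff_commute.2 (S.comm hij hkl h2 h1 h4 h3 a b (F.lev_top ha) (G.lev_top hb))]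
    exact Subgroup.one_mem _

theorem Opp_phi {i j k l : Idx n} (h : Opp i j k l) {φ : Idx n → ℤ} (hφ : Odd' φ) :
    φ k + φ l = - (φ i + φ j) := by
  rcases h with ⟨rfl, rfl⟩ | ⟨rfl, rfl⟩ <;> rw [hφ, hφ] <;> ring

/-- `Prp`: proportional roots -/
def Prp (i j k l : Idx n) : Prop := Opp i j k l ∨ (k = i ∧ l = j) ∨ (k = j ∧ l = i)

/-- dual functional -/
def dual (k : Idx n) : Idx n → ℤ := fun i => if i = k then 1 else if i = Idx.neg k then -1 else 0

theorem dual_odd (k : Idx n) : Odd' (dual k) := by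
  intro i
  unfold dual
  have h1 : Idx.neg i = k ↔ i = Idx.neg k := by
    constructor
    · rintro rfl; rw [Idx.neg_neg]
    · rintro rfl; rw [Idx.neg_neg]
  have h0 := Idx.neg_ne k
  simp only [Idx.neg_eq_neg, h1]
  by_cases h : i = k
  · subst h; simp [h0.symm]
  · by_cases h' : i = Idx.neg k
    · subst h'; simp [h0]
    · simp [h, h']

theorem exists_phi {i j k l : Idx n} (hij : i ≠ Idx.neg j) (hkl : k ≠ Idx.neg l)
    (h : ¬ Prp i j k l) : ∃ φ : Idx n → ℤ, Odd' φ ∧ φ i + φ j = 0 ∧ 0 < φ k + φ l := by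
  have hji := Idx.ne_comm_neg hij
  have hlk := Idx.ne_comm_neg hkl
  have hn := @Idx.neg_ne n
  have hnn := @Idx.neg_neg n
  by_cases h1 : k = i ∨ k = j ∨ k = Idx.neg i ∨ k = Idx.neg j
  · by_cases h2 : l = i ∨ l = j ∨ l = Idx.neg i ∨ l = Idx.neg j
    · have ho : Odd' (fun m => dual i m - dual j m) := by
        intro m; simp only [dual_odd i m, dual_odd j m]; ring
      have ho' : Odd' (fun m => dual j m - dual i m) := by
        intro m; simp only [dual_odd i m, dual_odd j m]; ring
      by_cases hp : 0 < (dual i k - dual j k) + (dual i l - dual j l)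
      · refine ⟨_, ho, ?_, hp⟩
        simp only [dual]; grind
      · refine ⟨_, ho', ?_, ?_⟩
        · simp only [dual]; grind
        · simp only [dual, Prp, Opp] at *
          have := hn i
          have := hn j
          have := hn k
          have := hn l
          have := hnn i
          have := hnn j
          clear hn hnn ho ho'
          rcases h1 with rfl | rfl | rfl | rfl <;> rcases h2 with rfl | rfl | rfl | rfl <;> grind
    · refine ⟨dual l, dual_odd l, ?_, ?_⟩ <;> simp only [dual] <;> grind
  · refine ⟨dual k, dual_odd k, ?_, ?_⟩ <;> simp only [dual] <;> grind

end St
theorem conj_closed {H : Type*} [Group H] {S : Set H} {C : Subgroup H}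
    (hinv : ∀ s ∈ S, s⁻¹ ∈ S) (h : ∀ s ∈ S, ∀ c ∈ C, s * c * s⁻¹ ∈ C) :
    ∀ g ∈ Subgroup.closure S, ∀ c ∈ C, g * c * g⁻¹ ∈ C := by
  intro g hg
  induction hg using Subgroup.closure_induction'' with
  | mem s hs => exact h s hs
  | inv_mem s hs => exact h _ (hinv s hs)
  | one => simp
  | mul a b _ _ iha ihb =>
    intro c hc
    have := iha _ (ihb c hc)
    simpa [mul_assoc] using this

namespace St

variable {A : Type*} [Ring A] {D : FormRingData A} {n : ℕ} {H : Type*} [Group H]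
  {x : Idx n → Idx n → A → H}

theorem chev_V (S : St D n x) {F G K : FormIdeal D} (hP : F.ProdLe G K) {φ : Idx n → ℤ}
    (hφ : Odd' φ) {i j k l : Idx n}
    {a b : A} (hij : i ≠ Idx.neg j) (hkl : k ≠ Idx.neg l) (ha : F.lev i j a)
    (hb : G.lev k l b) (h1 : 0 ≤ φ i + φ j) (h2 : 0 < φ k + φ l) :
    ⁅x i j a, x k l b⁆ ∈ V x φ K := by
  refine Subgroup.closure_mono ?_ (S.chev hP hij hkl ha hb ?_)
  · rintro h ⟨p, q, c, hpq, hc, ⟨s, t, hs, ht, hst⟩, rfl⟩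
    refine ⟨p, q, c, hpq, hc, ?_, rfl⟩
    rw [hst φ hφ]; positivity
  · intro h
    have := Opp_phi h hφ
    omega

theorem V_gens_inv (S : St D n x) (φ : Idx n → ℤ) (F : FormIdeal D) :
    ∀ s ∈ {h | ∃ i j a, i ≠ Idx.neg j ∧ F.lev i j a ∧ 0 < φ i + φ j ∧ h = x i j a},
    s⁻¹ ∈ {h | ∃ i j a, i ≠ Idx.neg j ∧ F.lev i j a ∧ 0 < φ i + φ j ∧ h = x i j a} := by
  rintro s ⟨i, j, a, hij, ha, hp, rfl⟩
  exact ⟨i, j, -a, hij, F.lev_neg ha, hp, S.inv hij ha⟩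

theorem V_conj (S : St D n x) {F : FormIdeal D} {φ : Idx n → ℤ}
    (hφ : Odd' φ) {i j : Idx n} {c : A} (hij : i ≠ Idx.neg j) (hc : (FormIdeal.top D).lev i j c)
    (h1 : 0 ≤ φ i + φ j) : ∀ v ∈ V x φ F, x i j c * v * (x i j c)⁻¹ ∈ V x φ F := by
  intro v hv
  induction hv using Subgroup.closure_induction with
  | mem v hv =>
    obtain ⟨k, l, b, hkl, hb, hp, rfl⟩ := hv
    have := S.chev_V (FormIdeal.prodLe_top F) hφ hij hkl hc hb h1 hp
    have h2 : x k l b ∈ V x φ F := Subgroup.subset_closure ⟨k, l, b, hkl, hb, hp, rfl⟩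
    have h3 := mul_mem this h2
    simpa [commutatorElement_def] using h3
  | one => simp
  | mul a b _ _ iha ihb => simpa [mul_assoc] using mul_mem iha ihb
  | inv a _ iha => simpa [mul_assoc] using inv_mem iha

theorem V_norm (S : St D n x) {F : FormIdeal D} {φ : Idx n → ℤ}
    (hφ : Odd' φ) : ∀ g ∈ V x φ (FormIdeal.top D), ∀ v ∈ V x φ F, g * v * g⁻¹ ∈ V x φ F := by
  apply conj_closed (S.V_gens_inv φ _)
  rintro s ⟨i, j, a, hij, ha, hp, rfl⟩
  exact S.V_conj hφ hij ha hp.le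

theorem V_comm (S : St D n x) {F : FormIdeal D} {φ : Idx n → ℤ}
    (hφ : Odd' φ) {i j : Idx n} {a : A} (hij : i ≠ Idx.neg j) (ha : F.lev i j a)
    (h1 : 0 ≤ φ i + φ j) : ∀ v ∈ V x φ (FormIdeal.top D), ⁅x i j a, v⁆ ∈ V x φ F := by
  intro v hv
  have hN := S.V_norm (F := F) hφ
  induction hv using Subgroup.closure_induction with
  | mem v hv =>
    obtain ⟨k, l, b, hkl, hb, hp, rfl⟩ := hv
    exact S.chev_V (FormIdeal.prodLe_top F).symm hφ hij hkl ha hb h1 hp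
  | one => simp
  | mul v w hv hw ihv ihw =>
    have := mul_mem ihv (hN v hv _ ihw)
    have e : ⁅x i j a, v * w⁆ = ⁅x i j a, v⁆ * (v * ⁅x i j a, w⁆ * v⁻¹) := by
      simp only [commutatorElement_def]; group
    rwa [e]
  | inv v hv ihv =>
    have := inv_mem (hN v⁻¹ (inv_mem hv) _ ihv)
    have e : ⁅x i j a, v⁻¹⁆ = (v⁻¹ * ⁅x i j a, v⁆ * v⁻¹⁻¹)⁻¹ := by
      simp only [commutatorElement_def]; group
    rwa [e]

/-- rank one set -/
def betSet (D : FormRingData A) (x : Idx n → Idx n → A → H) (i j : Idx n) : Set H :=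
  {h | ∃ p q c, p ≠ Idx.neg q ∧ Prp i j p q ∧ (FormIdeal.top D).lev p q c ∧ h = x p q c}

/-- rank one group -/
def bet (D : FormRingData A) (x : Idx n → Idx n → A → H) (i j : Idx n) : Subgroup H :=
  Subgroup.closure (betSet D x i j)

theorem Prp_phi {i j k l : Idx n} (h : Prp i j k l) {φ : Idx n → ℤ} (hφ : Odd' φ)
    (h0 : φ i + φ j = 0) : φ k + φ l = 0 := by
  rcases h with h | ⟨rfl, rfl⟩ | ⟨rfl, rfl⟩
  · rw [Opp_phi h hφ, h0, neg_zero]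
  · exact h0
  · rw [add_comm]; exact h0

theorem bet_conj (S : St D n x) {F : FormIdeal D} {φ : Idx n → ℤ}
    (hφ : Odd' φ) {i j : Idx n} (h0 : φ i + φ j = 0) :
    ∀ g ∈ bet D x i j, ∀ v ∈ V x φ F, g * v * g⁻¹ ∈ V x φ F := by
  apply conj_closed
  · rintro s ⟨p, q, c, hpq, hp, hc, rfl⟩
    exact ⟨p, q, -c, hpq, hp, FormIdeal.lev_neg _ hc, S.inv hpq hc⟩
  · rintro s ⟨p, q, c, hpq, hp, hc, rfl⟩
    exact S.V_conj hφ hpq hc (Prp_phi hp hφ h0).ge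

/-- generators of the relative group -/
def relSet (x : Idx n → Idx n → A → H) (F : FormIdeal D) : Set H :=
  {h | ∃ i j b g, i ≠ Idx.neg j ∧ F.lev i j b ∧ g ∈ bet D x i j ∧ h = g * x i j b * g⁻¹}

theorem gens_inv (S : St D n x) (F : FormIdeal D) : ∀ s ∈ gens x F, s⁻¹ ∈ gens x F := by
  rintro s ⟨i, j, a, hij, ha, rfl⟩
  exact ⟨i, j, -a, hij, F.lev_neg ha, S.inv hij ha⟩

theorem V_le_FF (φ : Idx n → ℤ) (F : FormIdeal D) : V x φ F ≤ FF x F := by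
  apply Subgroup.closure_mono
  rintro s ⟨i, j, a, hij, ha, -, rfl⟩
  exact ⟨i, j, a, hij, ha, rfl⟩

theorem FF_le_rel (F : FormIdeal D) : FF x F ≤ Subgroup.closure (relSet x F) := by
  apply Subgroup.closure_mono
  rintro s ⟨i, j, a, hij, ha, rfl⟩
  exact ⟨i, j, a, 1, hij, ha, one_mem _, by simp⟩

theorem EE_le_rel (S : St D n x) (F : FormIdeal D) : EE x F ≤ Subgroup.closure (relSet x F) := by
  have hN : (Subgroup.closure (relSet x F)).Normal := by
    constructor
    intro c hc g
    have hg : g ∈ Subgroup.closure (gens x (FormIdeal.top D)) := by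
      have := S.gen
      unfold gens
      rw [this]; trivial
    refine conj_closed (S.gens_inv _) ?_ g hg c hc
    rintro s ⟨k, l, d, hkl, hd, rfl⟩ c hc
    induction hc using Subgroup.closure_induction with
    | mem v hv =>
      obtain ⟨i, j, b, g, hij, hb, hg, rfl⟩ := hv
      by_cases hp : Prp i j k l
      · apply Subgroup.subset_closure
        refine ⟨i, j, b, x k l d * g, hij, hb, mul_mem ?_ hg, by simp [mul_assoc]⟩
        exact Subgroup.subset_closure ⟨k, l, d, hkl, hp, hd, rfl⟩
      · obtain ⟨φ, hφ, h0, h1⟩ := exists_phi hij hkl hp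
        have hs := S.bet_conj (F := FormIdeal.top D) hφ h0 g⁻¹ (inv_mem hg) (x k l d)
          (Subgroup.subset_closure ⟨k, l, d, hkl, hd, h1, rfl⟩)
        have hV := S.bet_conj hφ h0 g hg _ (inv_mem (S.V_comm hφ hij hb h0.ge _ hs))
        have h2 : g * x i j b * g⁻¹ ∈ Subgroup.closure (relSet x F) :=
          Subgroup.subset_closure ⟨i, j, b, g, hij, hb, hg, rfl⟩
        have := mul_mem (FF_le_rel F (V_le_FF φ F hV)) h2
        convert this using 1
        simp only [commutatorElement_def]; group
    | one => simp
    | mul a b _ _ iha ihb => simpa [mul_assoc] using mul_mem iha ihb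
    | inv a _ iha => simpa [mul_assoc] using inv_mem iha
  apply Subgroup.normalClosure_le_normal
  exact Subgroup.subset_closure.trans (FF_le_rel F)

theorem exists_h (hn : 3 ≤ n) (i j : Idx n) :
    ∃ h : Idx n, h ≠ i ∧ h ≠ j ∧ h ≠ Idx.neg i ∧ h ≠ Idx.neg j := by
  have : ∃ m : Fin n, m ∉ ({i.1, j.1} : Finset (Fin n)) := by
    have hc : ({i.1, j.1} : Finset (Fin n)).card < (Finset.univ : Finset (Fin n)).card := by
      have := Finset.card_le_two (a := i.1) (b := j.1)
      simp only [Finset.card_univ, Fintype.card_fin]; omega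
    obtain ⟨m, -, hm⟩ := Finset.exists_mem_notMem_of_card_lt_card hc
    exact ⟨m, hm⟩
  obtain ⟨m, hm⟩ := this
  simp only [Finset.mem_insert, Finset.mem_singleton, not_or] at hm
  refine ⟨(m, true), ?_, ?_, ?_, ?_⟩ <;> simp [Idx.neg, Prod.ext_iff, hm]

theorem r3' (S : St D n x) {i j h : Idx n} (h1 : h ≠ i) (h2 : h ≠ j) (h3 : h ≠ Idx.neg i)
    (h4 : h ≠ Idx.neg j) (hij : i ≠ j) (hij' : i ≠ Idx.neg j) (b : A) :
    x i j b = ⁅x i h (D.bar (D.w (Idx.neg h)) * b), x (Idx.neg h) j 1⁆ := by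
  rw [S.r3 h1.symm (Idx.ne_comm_neg h3) h2.symm (Idx.ne_comm_neg h4) hij hij', mul_one,
    ← mul_assoc, D.w_bw, one_mul]

theorem r5' (S : St D n x) {i h : Idx n} (h1 : h ≠ i) (h3 : h ≠ Idx.neg i) (b : A)
    (hb : b ∈ D.Lambda) :
    x i i b = x h i (D.w (Idx.neg h) * b) * ⁅x h h (-b), x (Idx.neg h) i 1⁆ := by
  rw [S.r5 h1.symm (Idx.ne_comm_neg h3) _ _ (neg_mem hb), ← mul_assoc, ← S.add h3 _ _
    (FormIdeal.lev_top_short h1 _) (FormIdeal.lev_top_short h1 _)]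
  simp [D.bar_one, S.zero h3]

/-- decomposition of root elements -/
theorem decomp (S : St D n x) (hn : 3 ≤ n) (F : FormIdeal D) {i j : Idx n} (hij : i ≠ Idx.neg j)
    {b : A} (hb : F.lev i j b) : ∃ p q c p' q' c' k l d,
      p ≠ Idx.neg q ∧ p' ≠ Idx.neg q' ∧ k ≠ Idx.neg l ∧
      ¬ Prp i j p q ∧ ¬ Prp i j p' q' ∧ ¬ Prp i j k l ∧
      F.lev p q c ∧ F.lev p' q' c' ∧ (FormIdeal.top D).lev k l d ∧
      x i j b = x p q c * ⁅x p' q' c', x k l d⁆ := by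
  obtain ⟨h, h1, h2, h3, h4⟩ := exists_h hn i j
  have g1 := Idx.ne_comm_neg h3
  have g2 := Idx.ne_comm_neg h4
  have g3 : Idx.neg h ≠ Idx.neg j := fun e => h2 (Idx.neg_injective e)
  have g4 : Idx.neg h ≠ Idx.neg i := fun e => h1 (Idx.neg_injective e)
  by_cases hd : i = j
  · subst hd
    rw [F.lev_long] at hb
    refine ⟨h, i, D.w (Idx.neg h) * b, h, h, -b, Idx.neg h, i, 1, h3, (Idx.neg_ne h).symm, g3,
      ?_, ?_, ?_, ?_, ?_, ?_, S.r5' h1 h3 b (F.gamma_le_Lambda hb)⟩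
    · simp [Prp, Opp, h1, h3]
    · simp [Prp, Opp, h1, h3]
    · simp [Prp, Opp, g1.symm, g3]
    · rw [F.lev_short h1]; exact F.mul_mem_left _ _ (F.gamma_le_I hb)
    · rw [F.lev_long]; exact neg_mem hb
    · rw [FormIdeal.lev_short _ g1.symm]; trivial
  · rw [F.lev_short hd] at hb
    refine ⟨i, h, 0, i, h, D.bar (D.w (Idx.neg h)) * b, Idx.neg h, j, 1, g1, g1, g3,
      ?_, ?_, ?_, ?_, ?_, ?_, ?_⟩
    · simp [Prp, Opp, h1, h2, h3, h4]
    · simp [Prp, Opp, h1, h2, h3, h4]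
    · simp [Prp, Opp, g1.symm, g2.symm, g3, g4]
    · rw [F.lev_short h1.symm]; exact zero_mem _
    · rw [F.lev_short h1.symm]; exact F.mul_mem_left _ _ hb
    · rw [FormIdeal.lev_short _ g2.symm]; trivial
    · rw [S.zero g1, one_mul]; exact S.r3' h1 h2 h3 h4 hd hij b

end St
theorem grp_central {H : Type*} [Group H] {a y z m l : H} (h1 : y⁻¹ * z * y = z * m)
    (h2 : a⁻¹ * z * a = l * z) (h3 : Commute a m) (h4 : Commute y l) : Commute ⁅a, y⁆ z := by
  have e1 : z * y = y * (z * m) := by rw [← h1]; group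
  have e2 : z * a = a * (l * z) := by rw [← h2]; group
  have e3 := h3.eq
  have e4 := h4.eq
  have e5 : z * m * y⁻¹ = y⁻¹ * z := by rw [← h1]; group
  have e6 : a * l * z = z * a := by rw [e2, mul_assoc]
  -- `z ↦ z m ↦ l z m ↦ l z ↦ z`
  have s1 : y⁻¹ * z = z * m * y⁻¹ := e5.symm
  have s2 : a⁻¹ * (z * m) = l * z * m * a⁻¹ := by
    have : a⁻¹ * (z * m) = (a⁻¹ * z * a) * (a⁻¹ * m) := by group
    rw [this, h2, (h3.inv_left).eq]; group
  have s3 : y * (l * z * m) = l * z * y := by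
    calc y * (l * z * m) = (y * l) * (z * m) := by group
      _ = l * (y * (z * m)) := by rw [e4]; group
      _ = l * z * y := by rw [← e1]; group
  have s4 : a * (l * z) = z * a := e2.symm
  show ⁅a, y⁆ * z = z * ⁅a, y⁆
  rw [commutatorElement_def]
  calc a * y * a⁻¹ * y⁻¹ * z = a * y * a⁻¹ * (y⁻¹ * z) := by group
    _ = a * y * (a⁻¹ * (z * m)) * y⁻¹ := by rw [s1]; group
    _ = a * (y * (l * z * m)) * a⁻¹ * y⁻¹ := by rw [s2]; group
    _ = (a * (l * z)) * y * a⁻¹ * y⁻¹ := by rw [s3]; group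
    _ = z * (a * y * a⁻¹ * y⁻¹) := by rw [s4]; group

theorem grp_move {H : Type*} [Group H] {t u1 u2 u v y m : H} (ht : t = u1 * ⁅u, v⁆ * u2)
    (h1 : Commute y u1) (h2 : Commute y u2) (h3 : Commute y u) (hm : ⁅v⁻¹, y⁆ = m)
    (hc : ⁅u, m⁆ ∈ Subgroup.center H) : ⁅t, y⁆ = ⁅u, m⁆⁻¹ := by
  rw [Subgroup.mem_center_iff] at hc
  have e0 : y * v * y⁻¹ = v * m := by rw [← hm, commutatorElement_def]; group
  have e1 : y * u1 * y⁻¹ = u1 := by rw [h1.eq]; group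
  have e2 : y * u2 * y⁻¹ = u2 := by rw [h2.eq]; group
  have e3 : y * u * y⁻¹ = u := by rw [h3.eq]; group
  have key : y * t * y⁻¹ = t * ⁅u, m⁆ := by
    calc y * t * y⁻¹ = (y * u1 * y⁻¹) * ((y * u * y⁻¹) * (y * v * y⁻¹) * (y * u * y⁻¹)⁻¹ *
          (y * v * y⁻¹)⁻¹) * (y * u2 * y⁻¹) := by
            rw [ht, commutatorElement_def]; group
      _ = u1 * ⁅u, v⁆ * (v * ⁅u, m⁆ * v⁻¹) * u2 := by
        rw [e0, e1, e2, e3]; simp only [commutatorElement_def]; group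
      _ = u1 * ⁅u, v⁆ * (⁅u, m⁆ * u2) := by rw [hc v]; group
      _ = t * ⁅u, m⁆ := by rw [← hc u2, ht]; group
  calc ⁅t, y⁆ = t * (y * t * y⁻¹)⁻¹ := by rw [commutatorElement_def]; group
    _ = t * ⁅u, m⁆⁻¹ * t⁻¹ := by rw [key]; group
    _ = ⁅u, m⁆⁻¹ := by
      have := hc t
      have h' : t * ⁅u, m⁆⁻¹ = ⁅u, m⁆⁻¹ * t := by
        have h5 : Commute t ⁅u, m⁆ := this
        exact h5.inv_right.eq
      rw [h']; group

namespace St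

variable {A : Type*} [Ring A] {D : FormRingData A} {n : ℕ} {H : Type*} [Group H]
  {x : Idx n → Idx n → A → H}

theorem lev_negidx (F : FormIdeal D) {i j : Idx n} {a : A} :
    F.lev (Idx.neg i) (Idx.neg j) a ↔ F.lev i j a := by
  simp [FormIdeal.lev, Idx.neg_eq_neg]

theorem negidx {i j : Idx n} (h : i ≠ Idx.neg j) : Idx.neg i ≠ Idx.neg (Idx.neg j) :=
  fun e => h (Idx.neg_injective e)

/-- elementary commutators at a position -/
def Yset (x : Idx n → Idx n → A → H) (F G : FormIdeal D) (i j : Idx n) : Set H :=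
  {h | ∃ a b, F.lev i j a ∧ G.lev i j b ∧ h = ⁅x i j a, x (Idx.neg i) (Idx.neg j) b⁆}

/-- subgroup of elementary commutators at a position -/
def Ysub (x : Idx n → Idx n → A → H) (F G : FormIdeal D) (i j : Idx n) : Subgroup H :=
  Subgroup.closure (Yset x F G i j)

/-- all root elements of level `K` are trivial -/
def Triv (x : Idx n → Idx n → A → H) (K : FormIdeal D) : Prop :=
  ∀ p q c, p ≠ Idx.neg q → K.lev p q c → x p q c = 1

theorem nc (S : St D n x) {F G K : FormIdeal D} (hP : F.ProdLe G K) (hT : Triv x K)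
    {i j k l : Idx n}
    {a b : A} (hij : i ≠ Idx.neg j) (hkl : k ≠ Idx.neg l) (ha : F.lev i j a)
    (hb : G.lev k l b) (ho : ¬ Opp i j k l) : Commute (x i j a) (x k l b) := by
  rw [← commutatorElement_eq_one_iff_commute]
  have h := S.chev hP hij hkl ha hb ho
  have : Subgroup.closure (chevSet x K i j k l) ≤ ⊥ := by
    rw [Subgroup.closure_le]
    rintro h ⟨p, q, c, hpq, hc, -, rfl⟩
    exact hT p q c hpq hc
  exact Subgroup.mem_bot.1 (this h)

theorem nc_V (S : St D n x) {F G K : FormIdeal D} (hP : F.ProdLe G K) (hT : Triv x K)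
    {i j : Idx n} {a : A} (hij : i ≠ Idx.neg j) (ha : F.lev i j a) {φ : Idx n → ℤ}
    (hφ : Odd' φ) (h0 : φ i + φ j = 0) : ∀ m ∈ V x φ G, Commute (x i j a) m := by
  intro m hm
  have : V x φ G ≤ Subgroup.centralizer {x i j a} := by
    unfold V
    rw [Subgroup.closure_le]
    rintro h ⟨k, l, b, hkl, hb, hp, rfl⟩
    rw [SetLike.mem_coe, Subgroup.mem_centralizer_singleton_iff]
    refine (S.nc hP hT hij hkl ha hb ?_).eq.symm
    intro ho
    have := Opp_phi ho hφ
    omega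
  have := this hm
  rw [Subgroup.mem_centralizer_singleton_iff] at this
  exact this.symm

theorem mem_center_of (S : St D n x) {y : H}
    (h : ∀ k l c, k ≠ Idx.neg l → (FormIdeal.top D).lev k l c → Commute y (x k l c)) :
    y ∈ Subgroup.center H := by
  have : (⊤ : Subgroup H) ≤ Subgroup.centralizer {y} := by
    rw [← S.gen, Subgroup.closure_le]
    rintro s ⟨k, l, c, hkl, hc, rfl⟩
    rw [SetLike.mem_coe, Subgroup.mem_centralizer_singleton_iff]
    exact (h k l c hkl hc).eq.symm
  rw [Subgroup.mem_center_iff]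
  intro g
  have := this (Subgroup.mem_top g)
  rwa [Subgroup.mem_centralizer_singleton_iff] at this

theorem central (S : St D n x) (hn : 3 ≤ n) {F G K : FormIdeal D} (hP : F.ProdLe G K)
    (hT : Triv x K) {i j : Idx n} (hij : i ≠ Idx.neg j) : Yset x F G i j ⊆ Subgroup.center H := by
  rintro s ⟨a, b, ha, hb, rfl⟩
  have hij2 := negidx hij
  have hb2 := (lev_negidx G).2 hb
  have main : ∀ k l c, k ≠ Idx.neg l → (FormIdeal.top D).lev k l c → ¬ Prp i j k l →
      Commute ⁅x i j a, x (Idx.neg i) (Idx.neg j) b⁆ (x k l c) := by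
    intro k l c hkl hc hp
    obtain ⟨φ, hφ, h0, h1⟩ := exists_phi hij hkl hp
    have h0' : φ (Idx.neg i) + φ (Idx.neg j) = 0 := by rw [hφ, hφ]; omega
    have hz : x k l c ∈ V x φ (FormIdeal.top D) :=
      Subgroup.subset_closure ⟨k, l, c, hkl, hc, h1, rfl⟩
    have m1 := S.V_comm hφ hij2 (G.lev_neg hb2) h0'.ge _ (inv_mem hz)
    have m2 := S.V_comm hφ hij (F.lev_neg ha) h0.ge _ hz
    rw [← S.inv hij2 hb2] at m1
    rw [← S.inv hij ha] at m2
    refine grp_central (m := ⁅(x (Idx.neg i) (Idx.neg j) b)⁻¹, (x k l c)⁻¹⁆⁻¹)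
      (l := ⁅(x i j a)⁻¹, x k l c⁆) ?_ ?_
      (S.nc_V hP hT hij ha hφ h0 _ (inv_mem m1)) (S.nc_V hP.symm hT hij2 hb2 hφ h0' _ m2)
    · simp only [commutatorElement_def]; group
    · simp only [commutatorElement_def]; group
  apply S.mem_center_of
  intro k l c hkl hc
  by_cases hp : Prp i j k l
  · obtain ⟨p, q, c, p', q', c', k', l', d, h1, h2, h3, h4, h5, h6, h7, h8, h9, h10⟩ :=
      S.decomp hn (FormIdeal.top D) hkl hc
    have tr : ∀ p q : Idx n, ¬ Prp k l p q → ¬ Prp i j p q := by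
      intro p q h h'
      apply h
      unfold Prp Opp at *
      have := Idx.neg_neg i
      have := Idx.neg_neg j
      grind
    rw [h10]
    have m1 := main _ _ _ h1 h7 (tr _ _ h4)
    have m2 := main _ _ _ h2 h8 (tr _ _ h5)
    have m3 := main _ _ _ h3 h9 (tr _ _ h6)
    rw [commutatorElement_def (x p' q' c')]
    exact m1.mul_right (((m2.mul_right m3).mul_right m2.inv_right).mul_right m3.inv_right)
  · exact main k l c hkl hc hp

theorem commute_of_triv (S : St D n x) (hn : 3 ≤ n) {F G K : FormIdeal D} (hP : F.ProdLe G K)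
    (hT : Triv x K) (hY : ∀ i j, i ≠ Idx.neg j → Yset x F G i j ⊆ {1}) :
    ⁅EE x F, EE x G⁆ = ⊥ := by
  have gg : ∀ i j a k l b, i ≠ Idx.neg j → k ≠ Idx.neg l → F.lev i j a → G.lev k l b →
      Commute (x i j a) (x k l b) := by
    intro i j a k l b hij hkl ha hb
    by_cases ho : Opp i j k l
    · rcases ho with ⟨rfl, rfl⟩ | ⟨rfl, rfl⟩
      · rw [← commutatorElement_eq_one_iff_commute]
        exact hY i j hij ⟨a, b, ha, (lev_negidx G).1 hb, rfl⟩
      · obtain ⟨b', hb', hxb⟩ := S.swap G hkl hb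
        rw [← commutatorElement_eq_one_iff_commute, hxb]
        exact hY i j hij ⟨a, b', ha, (lev_negidx G).1 hb', rfl⟩
    · exact S.nc hP hT hij hkl ha hb ho
  have ff : ∀ u ∈ FF x F, ∀ v ∈ FF x G, Commute u v := by
    have : FF x F ≤ Subgroup.centralizer (FF x G) := by
      unfold FF
      rw [Subgroup.centralizer_closure, Subgroup.closure_le]
      rintro s ⟨i, j, a, hij, ha, rfl⟩
      rw [SetLike.mem_coe, Subgroup.mem_centralizer_iff]
      rintro t ⟨k, l, b, hkl, hb, rfl⟩
      exact (gg i j a k l b hij hkl ha hb).eq.symm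
    intro u hu v hv
    exact ((Subgroup.mem_centralizer_iff.1 (this hu)) v hv).symm
  have memF : ∀ {i j a}, i ≠ Idx.neg j → F.lev i j a → x i j a ∈ FF x F :=
    fun hij ha => Subgroup.subset_closure ⟨_, _, _, hij, ha, rfl⟩
  have memG : ∀ {i j a}, i ≠ Idx.neg j → G.lev i j a → x i j a ∈ FF x G :=
    fun hij ha => Subgroup.subset_closure ⟨_, _, _, hij, ha, rfl⟩
  have fe : ∀ p q a, p ≠ Idx.neg q → F.lev p q a → ∀ v ∈ EE x G, Commute (x p q a) v := by
    intro p q a hpq ha v hv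
    have hsub : Subgroup.closure (relSet x G) ≤ Subgroup.centralizer {x p q a} := by
      rw [Subgroup.closure_le]
      rintro s ⟨i, j, b, g, hij, hb, hg, rfl⟩
      rw [SetLike.mem_coe, Subgroup.mem_centralizer_singleton_iff]
      refine Commute.eq (Commute.symm ?_)
      by_cases hp : Prp i j p q
      · obtain ⟨p1, q1, c1, p2, q2, c2, k, l, d, h1, h2, h3, h4, h5, h6, h7, h8, h9, h10⟩ :=
          S.decomp hn G hij hb
        obtain ⟨φ1, o1, z1, s1⟩ := exists_phi hij h1 h4
        obtain ⟨φ2, o2, z2, s2⟩ := exists_phi hij h2 h5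
        obtain ⟨φ, o3, z3, s3⟩ := exists_phi hij h3 h6
        have v1 := V_le_FF _ _ (S.bet_conj o1 z1 g hg _
          (Subgroup.subset_closure ⟨_, _, _, h1, h7, s1, rfl⟩ : x p1 q1 c1 ∈ V x φ1 G))
        have v2 := V_le_FF _ _ (S.bet_conj o2 z2 g hg _
          (Subgroup.subset_closure ⟨_, _, _, h2, h8, s2, rfl⟩ : x p2 q2 c2 ∈ V x φ2 G))
        have v3 := (S.bet_conj o3 z3 g hg _
          (Subgroup.subset_closure ⟨_, _, _, h3, h9, s3, rfl⟩ :
            x k l d ∈ V x φ (FormIdeal.top D)))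
        have e : g * x i j b * g⁻¹ = (g * x p1 q1 c1 * g⁻¹) * ((g * x p2 q2 c2 * g⁻¹) *
            ((g * x k l d * g⁻¹) * (g * x p2 q2 c2 * g⁻¹)⁻¹ * (g * x k l d * g⁻¹)⁻¹)) := by
          rw [h10, commutatorElement_def]; group
        rw [e]
        generalize g * x p1 q1 c1 * g⁻¹ = w1 at *
        generalize g * x p2 q2 c2 * g⁻¹ = w2 at *
        generalize g * x k l d * g⁻¹ = w3 at *
        have hxF := memF hpq ha
        refine (ff _ hxF _ v1).mul_right ((ff _ hxF _ v2).mul_right ?_)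
        have h11 := (V_le_FF _ _ (S.V_comm o3 hpq (F.lev_neg ha)
          (Prp_phi hp o3 z3).ge _ (inv_mem v3)))
        rw [← S.inv hpq ha] at h11
        have h12 : w3⁻¹ * x p q a * w3 ∈ FF x F := by
          have := mul_mem hxF h11
          convert this using 1
          simp only [commutatorElement_def]; group
        have h13 := ff _ h12 _ (inv_mem v2)
        have h14 := (Commute.conj_iff w3).2 h13
        have e' : w3 * (w3⁻¹ * x p q a * w3) * w3⁻¹ = x p q a := by group
        rw [e'] at h14
        exact h14
      · obtain ⟨φ, o, z, s⟩ := exists_phi hij hpq hp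
        have hv := V_le_FF _ _ (S.bet_conj o z g⁻¹ (inv_mem hg) _
          (Subgroup.subset_closure ⟨_, _, _, hpq, ha, s, rfl⟩ : x p q a ∈ V x φ F))
        have h14 := (Commute.conj_iff g).2 (ff _ hv _ (memG hij hb))
        have e' : g * (g⁻¹ * x p q a * g⁻¹⁻¹) * g⁻¹ = x p q a := by group
        rw [e'] at h14
        exact h14
    have := hsub (S.EE_le_rel G hv)
    rw [Subgroup.mem_centralizer_singleton_iff] at this
    exact this.symm
  rw [Subgroup.commutator_eq_bot_iff_le_centralizer]
  apply Subgroup.normalClosure_le_normal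
  rintro s ⟨p, q, a, hpq, ha, rfl⟩
  rw [SetLike.mem_coe, Subgroup.mem_centralizer_iff]
  intro v hv
  exact (fe p q a hpq ha v hv).eq.symm

end St
namespace St

variable {A : Type*} [Ring A] {D : FormRingData A} {n : ℕ} {H : Type*} [Group H]
  {x : Idx n → Idx n → A → H}

theorem Ysub_swap (S : St D n x) (F G : FormIdeal D) {i j : Idx n} (hij : i ≠ Idx.neg j) :
    Ysub x F G i j ≤ Ysub x F G j i := by
  apply Subgroup.closure_mono
  rintro s ⟨a, b, ha, hb, rfl⟩
  obtain ⟨a', ha', e1⟩ := S.swap F hij ha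
  obtain ⟨b', hb', e2⟩ := S.swap G (negidx hij) ((lev_negidx G).2 hb)
  exact ⟨a', b', ha', (lev_negidx G).1 hb', by rw [e1, e2]⟩

theorem move_short (S : St D n x) (hn : 3 ≤ n) {F G K : FormIdeal D} (hP : F.ProdLe G K)
    (hT : Triv x K) {i j h : Idx n} (hij : i ≠ j) (hij' : i ≠ Idx.neg j) (h1 : h ≠ i) (h2 : h ≠ j)
    (h3 : h ≠ Idx.neg i) (h4 : h ≠ Idx.neg j) : Ysub x F G i j ≤ Ysub x F G i h := by
  unfold Ysub
  rw [Subgroup.closure_le]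
  rintro s ⟨a, b, ha, hb, rfl⟩
  have nn := fun i : Idx n => Idx.neg_neg i
  have hih : i ≠ Idx.neg h := Idx.ne_comm_neg h3
  obtain ⟨b', hb', e2⟩ := S.swap G (negidx hij') ((lev_negidx G).2 hb)
  rw [F.lev_short hij] at ha
  rw [G.lev_short (by grind)] at hb'
  have ha1 : F.lev i h (D.bar (D.w (Idx.neg h)) * a) := by
    rw [F.lev_short h1.symm]; exact F.mul_mem_left _ _ ha
  have hm := S.r3 (i := Idx.neg h) (j := j) (l := Idx.neg i) (by grind) (by grind) (by grind)
    (by grind) (by grind) (by grind) (-1) b'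
  have hb2 : G.lev (Idx.neg h) (Idx.neg i) (D.w (Idx.neg j) * (-1 * b')) := by
    rw [G.lev_short (by grind)]
    exact G.mul_mem_left _ _ (G.mul_mem_left _ _ hb')
  obtain ⟨b3, hb3, e3⟩ := S.swap G (by grind) hb2
  rw [e3] at hm
  have hY : ⁅x i h (D.bar (D.w (Idx.neg h)) * a), x (Idx.neg i) (Idx.neg h) b3⁆ ∈
      Yset x F G i h := ⟨_, _, ha1, (lev_negidx G).1 hb3, rfl⟩
  have key := grp_move (t := x i j a) (u1 := 1) (u2 := 1)
    (u := x i h (D.bar (D.w (Idx.neg h)) * a))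
    (v := x (Idx.neg h) j 1) (y := x (Idx.neg i) (Idx.neg j) b)
    (m := x (Idx.neg i) (Idx.neg h) b3)
    (by rw [one_mul, mul_one]; exact S.r3' h1 h2 h3 h4 hij hij' a) (Commute.one_right _)
    (Commute.one_right _)
    (S.nc hP hT hih (negidx hij') ha1 ((lev_negidx G).2 hb)
      (by unfold Opp; grind [Idx.neg_eq_neg])).symm
    (by rw [e2, ← hm, S.inv (F := FormIdeal.top D) (by grind) (FormIdeal.lev_top_short (by grind) _)])
    (S.central hn hP hT hih hY)
  rw [key]
  exact inv_mem (Subgroup.subset_closure hY)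

theorem move_long (S : St D n x) (hn : 3 ≤ n) {F G K : FormIdeal D} (hP : F.ProdLe G K)
    (hT : Triv x K) {i h : Idx n} (h1 : h ≠ i)
    (h3 : h ≠ Idx.neg i) : Ysub x F G i i ≤ Ysub x F G h h := by
  unfold Ysub
  rw [Subgroup.closure_le]
  rintro s ⟨a, b, ha, hb, rfl⟩
  have nn := fun i : Idx n => Idx.neg_neg i
  have hn1 := fun i : Idx n => Idx.neg_ne i
  have hih : i ≠ Idx.neg h := Idx.ne_comm_neg h3
  have hb2 := (lev_negidx G).2 hb
  have hv : (FormIdeal.top D).lev (Idx.neg h) i 1 := FormIdeal.lev_top_short (by grind) _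
  obtain ⟨c, hc, ec⟩ := S.swap (FormIdeal.top D) (by grind) (FormIdeal.lev_neg _ hv)
  have hbL : b ∈ D.Lambda := G.gamma_le_Lambda ((G.lev_long _ _).1 hb)
  have hm := S.r5 (j := Idx.neg i) (l := Idx.neg h) (by grind) (by grind) b c hbL
  rw [nn] at hm
  rw [F.lev_long] at ha
  rw [G.lev_long] at hb
  have hg : G.lev h h (-(D.bar c * b * c)) := by
    rw [G.lev_long]
    have := G.gamma_conj (D.bar c) _ hb
    rw [D.bar_bar] at this
    exact neg_mem this
  have hs : G.lev (Idx.neg i) (Idx.neg h) (D.w (Idx.neg (Idx.neg i)) * (b * c)) := by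
    rw [G.lev_short (by grind)]
    exact G.mul_mem_left _ _ (G.mul_mem_right _ _ (G.gamma_le_I hb))
  rw [nn] at hs
  have hu : F.lev h h (-a) := by rw [F.lev_long]; exact neg_mem ha
  set u := x h h (-a)
  have hY : ⁅u, x (Idx.neg h) (Idx.neg h) (-(D.bar c * b * c))⁆ ∈ Yset x F G h h :=
    ⟨_, _, hu, hg, rfl⟩
  have hcen := S.central hn hP hT (by grind) hY
  have hcs : Commute u (x (Idx.neg i) (Idx.neg h) (D.w i * (b * c))) :=
    S.nc hP hT (by grind) (by grind) hu hs (by unfold Opp; grind [Idx.neg_eq_neg])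
  have hcs' : Commute u (x (Idx.neg i) (Idx.neg h) (D.w i * (b * c)))⁻¹ := hcs.inv_right
  set p := x (Idx.neg i) (Idx.neg h) (D.w i * (b * c))
  set q := x (Idx.neg h) (Idx.neg h) (-(D.bar c * b * c))
  have hum : ⁅u, (p * q)⁻¹⁆ = ⁅u, q⁆⁻¹ := by
    have hcq := Subgroup.mem_center_iff.1 hcen
    have e1 : u * p⁻¹ * u⁻¹ = p⁻¹ := by rw [hcs'.eq]; group
    calc ⁅u, (p * q)⁻¹⁆ = u * q⁻¹ * u⁻¹ * (u * p⁻¹ * u⁻¹) * p * q := by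
          rw [commutatorElement_def]; group
      _ = q⁻¹ * (q * u * q⁻¹ * u⁻¹) * q := by rw [e1]; group
      _ = q⁻¹ * (⁅u, q⁆⁻¹ * q) := by rw [commutatorElement_inv, commutatorElement_def]; group
      _ = q⁻¹ * (q * ⁅u, q⁆⁻¹) := by
          congr 1
          have : Commute q ⁅u, q⁆ := hcq q
          exact this.inv_right.eq.symm
      _ = ⁅u, q⁆⁻¹ := by group
  have key := grp_move (t := x i i a) (u1 := x h i (D.w (Idx.neg h) * a)) (u2 := 1)
    (u := u) (v := x (Idx.neg h) i 1) (y := x (Idx.neg i) (Idx.neg i) b)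
    (m := (p * q)⁻¹)
    (by rw [mul_one]; exact S.r5' h1 h3 a (F.gamma_le_Lambda ha))
    (S.nc hP hT h3 (by grind)
      (by rw [F.lev_short h1]; exact F.mul_mem_left _ _ (F.gamma_le_I ha)) hb2
      (by unfold Opp; grind [Idx.neg_eq_neg])).symm
    (Commute.one_right _)
    (S.nc hP hT (by grind) (by grind) hu hb2
      (by unfold Opp; grind [Idx.neg_eq_neg])).symm
    (by rw [← hm, commutatorElement_inv, S.inv (by grind) hv, ec])
    (by rw [hum]; exact inv_mem hcen)
  rw [key, hum, inv_inv]
  exact Subgroup.subset_closure hY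

theorem move_sl (S : St D n x) (hn : 3 ≤ n) {F G K : FormIdeal D} (hP : F.ProdLe G K)
    (hT : Triv x K) (hF : F.Gamma = F.I) {i j : Idx n} (hij : i ≠ j)
    (hij' : i ≠ Idx.neg j) : Ysub x F G j i ≤ Ysub x F G j j := by
  unfold Ysub
  rw [Subgroup.closure_le]
  rintro s ⟨a, b, ha, hb, rfl⟩
  have nn := fun i : Idx n => Idx.neg_neg i
  have hn1 := fun i : Idx n => Idx.neg_ne i
  have hji' : j ≠ Idx.neg i := Idx.ne_comm_neg hij'
  have hb2 := (lev_negidx G).2 hb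
  rw [F.lev_short hij.symm] at ha
  rw [G.lev_short hij.symm] at hb
  set g := D.bar (D.w (Idx.neg j)) * a
  have hg : g ∈ F.Gamma := by rw [hF]; exact F.mul_mem_left _ _ ha
  have hgj : F.lev j j g := by rwa [F.lev_long]
  have hgi : F.lev i i g := by rwa [F.lev_long]
  have hr := S.r5 hij hij' g 1 (F.gamma_le_Lambda hg)
  have ea : D.w (Idx.neg j) * (g * 1) = a := by
    rw [mul_one]; simp only [g]; rw [← mul_assoc, D.w_bw, one_mul]
  rw [ea, D.bar_one, one_mul, mul_one, ← S.inv (by grind) hgi] at hr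
  have hv : (FormIdeal.top D).lev (Idx.neg j) i 1 := FormIdeal.lev_top_short (by grind) _
  obtain ⟨b', hb', eb⟩ := S.swap G (negidx hji') hb2
  rw [G.lev_short (by grind)] at hb'
  have hm := S.r4 (i := Idx.neg j) (j := i) (by grind) (by grind) (-1) b'
  set q := x (Idx.neg j) (Idx.neg j) (D.w (Idx.neg i) * (-1 * b') -
      D.lam * D.bar (D.w (Idx.neg i) * (-1 * b'))) with hq
  have hY : ⁅x j j g, q⁆ ∈ Yset x F G j j := by
    refine ⟨_, _, hgj, ?_, rfl⟩
    rw [G.lev_long]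
    exact G.min_mem (G.mul_mem_left _ _ (G.mul_mem_left _ _ hb'))
  have key := grp_move (t := x j i a) (u1 := 1) (u2 := x i i g)
    (u := x j j g) (v := x (Idx.neg j) i 1) (y := x (Idx.neg j) (Idx.neg i) b)
    (m := q)
    (by rw [hr]; group) (Commute.one_right _)
    (S.nc hP hT (by grind) (by grind) hgi hb2
      (by unfold Opp; grind [Idx.neg_eq_neg])).symm
    (S.nc hP hT (by grind) (by grind) hgj hb2
      (by unfold Opp; grind [Idx.neg_eq_neg])).symm
    (by rw [← hm, S.inv (by grind) hv, eb])
    (S.central hn hP hT (by grind) hY)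
  rw [key]
  exact inv_mem (Subgroup.subset_closure hY)

end St
namespace St

variable {A : Type*} [Ring A] {D : FormRingData A} {n : ℕ} {H : Type*} [Group H]
  {x : Idx n → Idx n → A → H}

theorem short_short (S : St D n x) (hn : 3 ≤ n) {F G K : FormIdeal D} (hP : F.ProdLe G K)
    (hT : Triv x K) {i j p q : Idx n} (hij : i ≠ j) (hij' : i ≠ Idx.neg j) (hpq : p ≠ q)
    (hpq' : p ≠ Idx.neg q) : Ysub x F G i j ≤ Ysub x F G p q := by
  have nn := fun i : Idx n => Idx.neg_neg i
  have one : ∀ i j k : Idx n, i ≠ j → i ≠ Idx.neg j → i ≠ k → i ≠ Idx.neg k →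
      Ysub x F G i j ≤ Ysub x F G i k := by
    intro i j k h1 h2 h3 h4
    by_cases hk : k ≠ j ∧ k ≠ Idx.neg j
    · exact S.move_short hn hP hT h1 h2 h3.symm hk.1 (Idx.ne_comm_neg h4) hk.2
    · obtain ⟨h, g1, g2, g3, g4⟩ := exists_h hn i j
      refine (S.move_short hn hP hT h1 h2 g1 g2 g3 g4).trans
        (S.move_short hn hP hT g1.symm (Idx.ne_comm_neg g3) h3.symm ?_ (Idx.ne_comm_neg h4) ?_)
      · grind
      · grind
  obtain ⟨h, g1, g2, g3, g4⟩ := exists_h hn i p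
  calc Ysub x F G i j ≤ Ysub x F G i h := one _ _ _ hij hij' g1.symm (by grind)
    _ ≤ Ysub x F G h i := S.Ysub_swap F G (by grind)
    _ ≤ Ysub x F G h p := one _ _ _ g1 g3 g2 g4
    _ ≤ Ysub x F G p h := S.Ysub_swap F G g4
    _ ≤ Ysub x F G p q := one _ _ _ g2.symm (by grind) hpq hpq'

theorem long_long (S : St D n x) (hn : 3 ≤ n) {F G K : FormIdeal D} (hP : F.ProdLe G K)
    (hT : Triv x K) (i r : Idx n) : Ysub x F G i i ≤ Ysub x F G r r := by
  have nn := fun i : Idx n => Idx.neg_neg i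
  obtain ⟨h, g1, g2, g3, g4⟩ := exists_h hn i r
  exact (S.move_long hn hP hT g1 g3).trans (S.move_long hn hP hT g2.symm (by grind))

theorem Ysub_comm (F G : FormIdeal D) (i j : Idx n) :
    Ysub x F G i j ≤ Ysub x G F (Idx.neg i) (Idx.neg j) := by
  unfold Ysub
  rw [Subgroup.closure_le]
  rintro s ⟨a, b, ha, hb, rfl⟩
  rw [← commutatorElement_inv]
  apply inv_mem
  apply Subgroup.subset_closure
  refine ⟨b, a, (lev_negidx G).2 hb, (lev_negidx F).2 ha, ?_⟩
  rw [Idx.neg_neg, Idx.neg_neg]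

/-- subgroup generated by elementary commutators at positions in `T` -/
def YT (x : Idx n → Idx n → A → H) (F G : FormIdeal D) (T : Set (Idx n × Idx n)) : Subgroup H :=
  Subgroup.closure {h | ∃ p q, (p, q) ∈ T ∧ p ≠ Idx.neg q ∧ h ∈ Yset x F G p q}

/-- sufficient sets of positions -/
def Full (F G : FormIdeal D) (T : Set (Idx n × Idx n)) : Prop :=
  (∃ r, (r, r) ∈ T) ∧ ((∃ p q, p ≠ q ∧ p ≠ Idx.neg q ∧ (p, q) ∈ T) ∨ F.Gamma = F.I ∨
    G.Gamma = G.I)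

theorem Ysub_le_YT {F G : FormIdeal D} {T : Set (Idx n × Idx n)} {p q : Idx n}
    (h : (p, q) ∈ T) (hpq : p ≠ Idx.neg q) : Ysub x F G p q ≤ YT x F G T :=
  Subgroup.closure_mono fun _ hs => ⟨p, q, h, hpq, hs⟩

theorem all_le_YT (S : St D n x) (hn : 3 ≤ n) {F G K : FormIdeal D} (hP : F.ProdLe G K)
    (hT : Triv x K) {T : Set (Idx n × Idx n)} (hF : Full F G T) {i j : Idx n}
    (hij : i ≠ Idx.neg j) : Ysub x F G i j ≤ YT x F G T := by
  have nn := fun i : Idx n => Idx.neg_neg i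
  have nne := fun i : Idx n => Idx.neg_ne i
  obtain ⟨⟨r, hr⟩, h2⟩ := hF
  have hL : ∀ i, Ysub x F G i i ≤ YT x F G T := fun i =>
    (S.long_long hn hP hT i r).trans (Ysub_le_YT hr (nne r).symm)
  by_cases h : i = j
  · subst h; exact hL i
  rcases h2 with ⟨p, q, h1, h2, h3⟩ | h2 | h2
  · exact (S.short_short hn hP hT h hij h1 h2).trans (Ysub_le_YT h3 h2)
  · exact (S.move_sl hn hP hT h2 (Ne.symm h) (Idx.ne_comm_neg hij)).trans (hL i)
  · have h4 := S.move_sl hn hP.symm hT h2 (i := Idx.neg j) (j := Idx.neg i) (by grind) (by grind)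
    refine (Ysub_comm F G i j).trans (h4.trans ((Ysub_comm G F _ _).trans ?_))
    rw [nn]
    exact hL i

theorem YT_center (S : St D n x) (hn : 3 ≤ n) {F G K : FormIdeal D} (hP : F.ProdLe G K)
    (hT : Triv x K) (T : Set (Idx n × Idx n)) : YT x F G T ≤ Subgroup.center H := by
  unfold YT
  rw [Subgroup.closure_le]
  rintro s ⟨p, q, -, hpq, hs⟩
  exact S.central hn hP hT hpq hs

section map
variable {Q : Type*} [Group Q]

/-- transport of root elements -/
def mp (f : H →* Q) (x : Idx n → Idx n → A → H) : Idx n → Idx n → A → Q :=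
  fun i j a => f (x i j a)

theorem map (S : St D n x) (f : H →* Q) (hf : Function.Surjective f) : St D n (mp f x) where
  gen := by
    have := congrArg (Subgroup.map f) S.gen
    rw [MonoidHom.map_closure, Subgroup.map_top_of_surjective f hf] at this
    rw [← this]
    congr 1
    ext s
    constructor
    · rintro ⟨i, j, a, h1, h2, rfl⟩
      exact ⟨_, ⟨i, j, a, h1, h2, rfl⟩, rfl⟩
    · rintro ⟨_, ⟨i, j, a, h1, h2, rfl⟩, rfl⟩
      exact ⟨i, j, a, h1, h2, rfl⟩
  add := fun h a b ha hb => by simp only [mp]; rw [S.add h a b ha hb, map_mul]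
  sym := fun h1 h2 a => by simp only [mp]; rw [S.sym h1 h2]
  comm := fun h1 h2 h3 h4 h5 h6 a b ha hb => (S.comm h1 h2 h3 h4 h5 h6 a b ha hb).map f
  r3 := fun h1 h2 h3 h4 h5 h6 a b => by
    simp only [mp]; rw [← S.r3 h1 h2 h3 h4 h5 h6, map_commutatorElement]
  r4 := fun h1 h2 a b => by
    simp only [mp]; rw [← S.r4 h1 h2, map_commutatorElement]
  r5 := fun h1 h2 a b h => by
    simp only [mp]; rw [← map_mul, ← S.r5 h1 h2 a b h, map_commutatorElement]

theorem gens_mp (f : H →* Q) (F : FormIdeal D) : gens (mp f x) F = f '' gens x F := by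
  ext s
  constructor
  · rintro ⟨i, j, a, h1, h2, rfl⟩
    exact ⟨_, ⟨i, j, a, h1, h2, rfl⟩, rfl⟩
  · rintro ⟨_, ⟨i, j, a, h1, h2, rfl⟩, rfl⟩
    exact ⟨i, j, a, h1, h2, rfl⟩

theorem EE_mp (f : H →* Q) (hf : Function.Surjective f) (F : FormIdeal D) :
    EE (mp f x) F = (EE x F).map f := by
  unfold EE
  rw [gens_mp, Subgroup.map_normalClosure _ _ hf]

theorem YT_mp (f : H →* Q) (F G : FormIdeal D) (T : Set (Idx n × Idx n)) :
    YT (mp f x) F G T ≤ (YT x F G T).map f := by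
  unfold YT
  rw [Subgroup.closure_le]
  rintro s ⟨p, q, h1, h2, a, b, h3, h4, rfl⟩
  exact ⟨_, Subgroup.subset_closure ⟨p, q, h1, h2, a, b, h3, h4, rfl⟩,
    by simp only [mp]; rw [map_commutatorElement]⟩

theorem comm_mp (f : H →* Q) (hf : Function.Surjective f) (F G : FormIdeal D) :
    ⁅EE (mp f x) F, EE (mp f x) G⁆ = (⁅EE x F, EE x G⁆).map f := by
  rw [EE_mp f hf, EE_mp f hf, Subgroup.map_commutator]

end map

theorem mem_EE {F : FormIdeal D} {i j : Idx n} {a : A} (hij : i ≠ Idx.neg j) (ha : F.lev i j a) :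
    x i j a ∈ EE x F := Subgroup.subset_normalClosure ⟨i, j, a, hij, ha, rfl⟩

theorem comm_le_of_triv (S : St D n x) (hn : 3 ≤ n) {F G K : FormIdeal D} (hP : F.ProdLe G K)
    (hT : Triv x K) {T : Set (Idx n × Idx n)} (hF : Full F G T) :
    ⁅EE x F, EE x G⁆ ≤ YT x F G T := by
  have hc := S.YT_center hn hP hT (F := F) (G := G) T
  haveI : (YT x F G T).Normal := ⟨fun m hm g => by
    have := Subgroup.mem_center_iff.1 (hc hm) g
    rw [this]; simpa using hm⟩
  have hs := QuotientGroup.mk'_surjective (YT x F G T)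
  have h1 := (S.map _ hs).commute_of_triv hn hP (F := F) (G := G) (K := K)
    (fun p q c h1 h2 => by simp only [mp]; rw [hT p q c h1 h2, map_one])
    (fun i j hij s => by
      rintro ⟨a, b, ha, hb, rfl⟩
      simp only [mp]
      rw [← map_commutatorElement, Set.mem_singleton_iff, QuotientGroup.mk'_apply,
        QuotientGroup.eq_one_iff]
      exact S.all_le_YT hn hP hT hF hij (Subgroup.subset_closure ⟨a, b, ha, hb, rfl⟩))
  rw [comm_mp _ hs, Subgroup.map_eq_bot_iff, QuotientGroup.ker_mk'] at h1
  exact h1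

theorem comm_le (S : St D n x) (hn : 3 ≤ n) (F G : FormIdeal D) 
    {T : Set (Idx n × Idx n)} (hF : Full F G T) :
    ⁅EE x F, EE x G⁆ ≤ YT x F G T ⊔ EE x (F.prod G) := by
  have hs := QuotientGroup.mk'_surjective (EE x (F.prod G))
  have h1 := (S.map _ hs).comm_le_of_triv hn (FormIdeal.prodLe_prod F G) (T := T)
    (fun p q c h1 h2 => by
      simp only [mp]
      rw [QuotientGroup.mk'_apply, QuotientGroup.eq_one_iff]
      exact mem_EE h1 h2) hF
  rw [comm_mp _ hs] at h1
  have h2 := h1.trans (YT_mp _ F G T)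
  rw [Subgroup.map_le_iff_le_comap, Subgroup.comap_map_eq, QuotientGroup.ker_mk'] at h2
  exact h2

theorem YT_le (F G : FormIdeal D) (T : Set (Idx n × Idx n)) :
    YT x F G T ≤ ⁅EE x F, EE x G⁆ := by
  unfold YT
  rw [Subgroup.closure_le]
  rintro s ⟨p, q, h1, h2, a, b, h3, h4, rfl⟩
  exact Subgroup.commutator_mem_commutator (mem_EE h2 h3) (mem_EE (negidx h2)
    ((lev_negidx G).2 h4))

end St
namespace St

variable {A : Type*} [Ring A] {D : FormRingData A} {n : ℕ} {H : Type*} [Group H]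
  {x : Idx n → Idx n → A → H}

theorem lev_add (F : FormIdeal D) {i j : Idx n} {a b : A} (ha : F.lev i j a)
    (hb : F.lev i j b) : F.lev i j (a + b) := by
  unfold FormIdeal.lev at *; split_ifs at * <;> exact add_mem ha hb

/-- parameters whose root element lies in `R` -/
def par (S : St D n x) (R : Subgroup H) {i j : Idx n} (hij : i ≠ Idx.neg j) : AddSubgroup A where
  carrier := {c | (FormIdeal.top D).lev i j c ∧ x i j c ∈ R}
  zero_mem' := ⟨by unfold FormIdeal.lev; split_ifs <;> exact zero_mem _, by
    rw [S.zero hij]; exact one_mem _⟩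
  add_mem' := by
    rintro a b ⟨ha, ha'⟩ ⟨hb, hb'⟩
    exact ⟨lev_add _ ha hb, by rw [S.add hij _ _ ha hb]; exact mul_mem ha' hb'⟩
  neg_mem' := by
    rintro a ⟨ha, ha'⟩
    exact ⟨FormIdeal.lev_neg _ ha, by rw [← S.inv hij ha]; exact inv_mem ha'⟩

theorem prod_le (S : St D n x) (hn : 3 ≤ n) (F G : FormIdeal D) :
    EE x (F.prod G) ≤ ⁅EE x F, EE x G⁆ := by
  have nn := fun i : Idx n => Idx.neg_neg i
  have nne := fun i : Idx n => Idx.neg_ne i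
  set R := ⁅EE x F, EE x G⁆ with hR
  have cFG : ∀ {u v : H}, u ∈ EE x F → v ∈ EE x G → ⁅u, v⁆ ∈ R := fun hu hv =>
    Subgroup.commutator_mem_commutator hu hv
  have cGF : ∀ {u v : H}, u ∈ EE x G → v ∈ EE x F → ⁅u, v⁆ ∈ R := fun hu hv => by
    rw [hR, Subgroup.commutator_comm]
    exact Subgroup.commutator_mem_commutator hu hv
  haveI hRn : R.Normal := by rw [hR]; infer_instance
  have cl : ∀ {u : H} (v : H), u ∈ R → ⁅u, v⁆ ∈ R := fun {u} v hu => by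
    have h := hRn.conj_mem _ (inv_mem hu) v
    have := mul_mem hu h
    rw [commutatorElement_def]
    convert this using 1
    group
  have cr : ∀ (u : H) {v : H}, v ∈ R → ⁅u, v⁆ ∈ R := fun u v hv => by
    rw [← commutatorElement_inv]; exact inv_mem (cl u hv)
  have sh : ∀ {i j : Idx n} {c : A}, i ≠ j → i ≠ Idx.neg j → c ∈ (F.prod G).I → x i j c ∈ R := by
    intro i j c hij hij' hc
    have : (F.prod G).I ≤ S.par R hij' := by
      obtain ⟨h, h1, h2, h3, h4⟩ := exists_h hn i j
      have pr : ∀ a b : A, x i j (a * b) =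
          ⁅x i h (D.bar (D.w (Idx.neg h)) * a), x (Idx.neg h) j b⁆ := by
        intro a b
        rw [S.r3 h1.symm (Idx.ne_comm_neg h3) h2.symm (Idx.ne_comm_neg h4) hij hij',
          mul_assoc, ← mul_assoc, D.w_bw, one_mul]
      apply FormRingData.symI_le
      · intro a ha b hb
        refine ⟨FormIdeal.lev_top_short hij _, ?_⟩
        rw [pr]
        refine cFG (mem_EE (by grind) ?_) (mem_EE (by grind) ?_)
        · rw [F.lev_short h1.symm]; exact F.mul_mem_left _ _ ha
        · rw [G.lev_short (by grind)]; exact hb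
      · intro a ha b hb
        refine ⟨FormIdeal.lev_top_short hij _, ?_⟩
        rw [pr]
        refine cGF (mem_EE (by grind) ?_) (mem_EE (by grind) ?_)
        · rw [G.lev_short h1.symm]; exact G.mul_mem_left _ _ hb
        · rw [F.lev_short (by grind)]; exact ha
    exact (this hc).2
  apply Subgroup.normalClosure_le_normal
  rintro s ⟨i, j, c, hij, hc, rfl⟩
  by_cases h : i = j
  swap
  · rw [FormIdeal.lev_short _ h] at hc
    exact sh h hij hc
  subst h
  rw [FormIdeal.lev_long] at hc
  obtain ⟨h, h1, -, h3, -⟩ := exists_h hn i i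
  have hLam : (F.prod G).Gamma ≤ D.Lambda := (F.prod G).gamma_le_Lambda
  have fin : ∀ b g : A, g ∈ D.Lambda → g * D.bar b ∈ (F.prod G).I →
      ⁅x h h g, x (Idx.neg h) i (D.bar b)⁆ ∈ R → x i i (b * g * D.bar b) ∈ R := by
    intro b g hg hI hc
    rw [S.r5 h1.symm (Idx.ne_comm_neg h3) _ _ hg, D.bar_bar] at hc
    have h5 := (Subgroup.mul_mem_cancel_left R (sh h1 h3
      ((F.prod G).mul_mem_left (D.w (Idx.neg h)) _ hI))).1 hc
    rw [← S.inv (F := FormIdeal.top D) hij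
      (by rw [FormIdeal.lev_long]; exact D.lambda_conj _ _ hg)] at h5
    exact inv_mem_iff.1 h5
  have : (F.prod G).Gamma ≤ S.par R hij := by
    refine (D.symG_le_iff _ _ _ _ _).2 ⟨?_, ?_, ?_, ?_⟩
    · intro a ha
      refine ⟨by rw [FormIdeal.lev_long]; exact D.lambdaMin_mem a, ?_⟩
      have e := S.r4 h1.symm (Idx.ne_comm_neg h3) (D.bar (D.w (Idx.neg h)) * a) 1
      rw [mul_one, ← mul_assoc, D.w_bw, one_mul] at e
      rw [← e]
      exact cl _ (sh h1.symm (Idx.ne_comm_neg h3) ((F.prod G).mul_mem_left _ _ ha))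
    · intro a ha c hc
      refine ⟨by rw [FormIdeal.lev_long]; exact D.lambda_conj _ _ hc, ?_⟩
      have hb : D.bar a ∈ (F.prod G).I := (F.prod G).bar_mem a ha
      exact fin _ _ hc ((F.prod G).mul_mem_left _ _ hb) (cr _ (sh (by grind) (by grind) hb))
    · intro b hb g hg
      have hgL := F.gamma_le_Lambda hg
      refine ⟨by rw [FormIdeal.lev_long]; exact D.lambda_conj _ _ hgL, ?_⟩
      refine fin _ _ hgL (FormRingData.mem_symI_left (F.gamma_le_I hg) (G.bar_mem _ hb)) 
        (cFG (mem_EE (by grind) ?_) (mem_EE (by grind) ?_))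
      · rwa [F.lev_long]
      · rw [G.lev_short (by grind)]; exact G.bar_mem _ hb
    · intro b hb g hg
      have hgL := G.gamma_le_Lambda hg
      refine ⟨by rw [FormIdeal.lev_long]; exact D.lambda_conj _ _ hgL, ?_⟩
      refine fin _ _ hgL (FormRingData.mem_symI_right (F.bar_mem _ hb) (G.gamma_le_I hg)) 
        (cGF (mem_EE (by grind) ?_) (mem_EE (by grind) ?_))
      · rwa [G.lev_long]
      · rw [F.lev_short (by grind)]; exact F.bar_mem _ hb
  exact (this hc).2

theorem triple (S : St D n x) (hn : 3 ≤ n) (F K L : FormIdeal D)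
    (hb : ⁅EE x F, EE x (K.prod L)⁆ = ⊥) : ⁅EE x F, ⁅EE x K, EE x L⁆⁆ = ⊥ := by
  have nn := fun i : Idx n => Idx.neg_neg i
  have nne := fun i : Idx n => Idx.neg_ne i
  rw [Subgroup.commutator_eq_bot_iff_le_centralizer] at hb ⊢
  apply Subgroup.normalClosure_le_normal
  rintro s ⟨i, j, a, hij, ha, rfl⟩
  have goal : ∀ T : Set (Idx n × Idx n), Full K L T → (∀ p q, (p, q) ∈ T → p ≠ Idx.neg q →
      ∀ c d, K.lev p q c → L.lev p q d →
      Commute ⁅x p q c, x (Idx.neg p) (Idx.neg q) d⁆ (x i j a)) →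
      x i j a ∈ Subgroup.centralizer ((⁅EE x K, EE x L⁆ : Subgroup H) : Set H) := by
    intro T hT hc
    have : ⁅EE x K, EE x L⁆ ≤ Subgroup.centralizer {x i j a} := by
      refine (S.comm_le hn K L hT).trans (sup_le ?_ ?_)
      · unfold YT
        rw [Subgroup.closure_le]
        rintro s ⟨p, q, h1, h2, c, d, h3, h4, rfl⟩
        rw [SetLike.mem_coe, Subgroup.mem_centralizer_singleton_iff]
        exact (hc p q h1 h2 c d h3 h4).eq
      · intro s hs
        rw [Subgroup.mem_centralizer_singleton_iff]
        exact Subgroup.mem_centralizer_iff.1 (hb (mem_EE hij ha)) s hs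
    rw [Subgroup.mem_centralizer_iff]
    intro s hs
    have := this hs
    rwa [Subgroup.mem_centralizer_singleton_iff] at this
  have hta := F.lev_top ha
  have far : ∀ p q, p ≠ Idx.neg q → i ≠ p → i ≠ q → i ≠ Idx.neg p → i ≠ Idx.neg q →
      j ≠ p → j ≠ q → j ≠ Idx.neg p → j ≠ Idx.neg q →
      ∀ c d, K.lev p q c → L.lev p q d →
      Commute ⁅x p q c, x (Idx.neg p) (Idx.neg q) d⁆ (x i j a) := by
    intro p q h0 h1 h2 h3 h4 h5 h6 h7 h8 c d hc hd
    have c1 : Commute (x p q c) (x i j a) :=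
      S.comm h0 hij h3 h4 h7 h8 _ _ (K.lev_top hc) hta
    have c2 : Commute (x (Idx.neg p) (Idx.neg q) d) (x i j a) :=
      S.comm (negidx h0) hij (by grind) (by grind) (by grind) (by grind) _ _
        (L.lev_top ((lev_negidx L).2 hd)) hta
    rw [commutatorElement_def]
    exact ((c1.mul_left c2).mul_left c1.inv_left).mul_left c2.inv_left
  by_cases h : i = j
  · subst h
    obtain ⟨h, h1, -, h3, -⟩ := exists_h hn i i
    obtain ⟨k, k1, k2, k3, k4⟩ := exists_h hn i h
    apply goal {(h, k), (h, h)} ⟨⟨h, by simp⟩, Or.inl ⟨h, k, k2.symm, by grind, by simp⟩⟩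
    intro p q hpq hpq'
    simp only [Set.mem_insert_iff, Set.mem_singleton_iff, Prod.mk.injEq] at hpq
    rcases hpq with ⟨rfl, rfl⟩ | ⟨rfl, rfl⟩
    · apply far <;> grind
    · apply far <;> grind
  · obtain ⟨h, h1, h2, h3, h4⟩ := exists_h hn i j
    apply goal {(Idx.neg i, h), (h, h)}
      ⟨⟨h, by simp⟩, Or.inl ⟨Idx.neg i, h, by grind, by grind, by simp⟩⟩
    intro p q hpq hpq'
    simp only [Set.mem_insert_iff, Set.mem_singleton_iff, Prod.mk.injEq] at hpq
    rcases hpq with ⟨rfl, rfl⟩ | ⟨rfl, rfl⟩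
    swap
    · apply far <;> grind
    · intro c d hc hd
      rw [nn]
      obtain ⟨c', hc', ec⟩ := S.swap K hpq' (K.lev_neg hc)
      rw [K.lev_short (by grind)] at hc'
      rw [F.lev_short h] at ha
      have hd2 := (lev_negidx L).2 hd
      rw [nn] at hd2
      rw [L.lev_short (by grind)] at hd
      have e1 : ⁅x q (Idx.neg i) c', x i j a⁆ = x q j (D.w i * (c' * a)) := by
        have := S.r3 (i := q) (j := Idx.neg i) (l := j) (by grind) (by grind) (by grind)
          (by grind) (by grind) (by grind) c' a
        rwa [nn] at this
      have e2 : ⁅x i (Idx.neg q) d, x q j (D.w i * (c' * a))⁆ = 1 := by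
        have := S.r3 (i := i) (j := Idx.neg q) (l := j) (by grind) (by grind) (by grind)
          (by grind) (by grind) (by grind) d (D.w i * (c' * a))
        rw [nn] at this
        rw [this]
        have hm : x i j (D.w q * (d * (D.w i * (c' * a)))) ∈
            EE x (F.prod (K.prod L)) := by
          apply mem_EE hij
          rw [FormIdeal.lev_short _ h]
          apply FormIdeal.mul_mem_left
          have : d * (D.w i * (c' * a)) = (d * D.w i * c') * a := by noncomm_ring
          rw [this]
          exact FormRingData.mem_symI_right ha
            (FormRingData.mem_symI_right hc' (L.mul_mem_right _ _ hd))
        have := (S.prod_le hn F (K.prod L)) hm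
        rw [Subgroup.commutator_eq_bot_iff_le_centralizer.2 hb] at this
        exact Subgroup.mem_bot.1 this
      have c1 : Commute (x i (Idx.neg q) d) (x i j a) :=
        S.comm (by grind) hij (by grind) (by grind) (by grind) (by grind) _ _
          (L.lev_top hd2) hta
      refine grp_central (m := 1) (l := x q j (D.w i * (c' * a))) ?_ ?_ (Commute.one_right _)
        (commutatorElement_eq_one_iff_commute.1 e2)
      · rw [mul_assoc, ← c1.eq]; group
      · rw [← e1, ← ec, ← S.inv hpq' hc, commutatorElement_def]; group

theorem quad (S : St D n x) (hn : 3 ≤ n) (F G K L : FormIdeal D)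
    {T1 T2 : Set (Idx n × Idx n)} (h1 : Full F G T1) (h2 : Full K L T2)
    (hd : ∀ p q r s, (p, q) ∈ T1 → (r, s) ∈ T2 → p.1 ≠ r.1 ∧ p.1 ≠ s.1 ∧ q.1 ≠ r.1 ∧ q.1 ≠ s.1)
    (hb : ⁅EE x (F.prod G), EE x (K.prod L)⁆ = ⊥) :
    ⁅⁅EE x F, EE x G⁆, ⁅EE x K, EE x L⁆⁆ = ⊥ := by
  have t1 := S.triple hn (F.prod G) K L hb
  rw [Subgroup.commutator_comm] at hb
  have t2 := S.triple hn (K.prod L) F G hb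
  rw [Subgroup.commutator_comm] at t2
  rw [Subgroup.commutator_eq_bot_iff_le_centralizer] at *
  refine (S.comm_le hn F G h1).trans (sup_le ?_ t1)
  have hYY : YT x F G T1 ≤ Subgroup.centralizer (YT x K L T2) := by
    unfold YT
    rw [Subgroup.centralizer_closure, Subgroup.closure_le]
    rintro s ⟨p, q, hT, hpq, a, b, ha, hb, rfl⟩
    rw [SetLike.mem_coe, Subgroup.mem_centralizer_iff]
    rintro t ⟨r, s, hT', hrs, c, d, hc, hd', rfl⟩
    obtain ⟨g1, g2, g3, g4⟩ := hd p q r s hT hT'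
    have nf : ∀ u v : Idx n, u.1 ≠ v.1 → v ≠ Idx.neg u := by
      rintro u v h rfl; exact h rfl
    have ta := F.lev_top ha
    have tb := G.lev_top ((lev_negidx G).2 hb)
    have tc := K.lev_top hc
    have td := L.lev_top ((lev_negidx L).2 hd')
    have k1 : Commute (x p q a) (x r s c) := S.comm hpq hrs (nf _ _ g1) (nf _ _ g3)
      (nf _ _ g2) (nf _ _ g4) _ _ ta tc
    have k2 : Commute (x p q a) (x (Idx.neg r) (Idx.neg s) d) :=
      S.comm hpq (negidx hrs) (nf _ _ g1) (nf _ _ g3) (nf _ _ g2) (nf _ _ g4) _ _ ta td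
    have k3 : Commute (x (Idx.neg p) (Idx.neg q) b) (x r s c) :=
      S.comm (negidx hpq) hrs (nf _ _ g1) (nf _ _ g3) (nf _ _ g2) (nf _ _ g4) _ _ tb tc
    have k4 : Commute (x (Idx.neg p) (Idx.neg q) b) (x (Idx.neg r) (Idx.neg s) d) :=
      S.comm (negidx hpq) (negidx hrs) (nf _ _ g1) (nf _ _ g3) (nf _ _ g2) (nf _ _ g4) _ _ tb td
    have m1 : Commute (x p q a) ⁅x r s c, x (Idx.neg r) (Idx.neg s) d⁆ := by
      rw [commutatorElement_def]
      exact ((k1.mul_right k2).mul_right k1.inv_right).mul_right k2.inv_right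
    have m2 : Commute (x (Idx.neg p) (Idx.neg q) b) ⁅x r s c, x (Idx.neg r) (Idx.neg s) d⁆ := by
      rw [commutatorElement_def]
      exact ((k3.mul_right k4).mul_right k3.inv_right).mul_right k4.inv_right
    have m3 : Commute ⁅x p q a, x (Idx.neg p) (Idx.neg q) b⁆
        ⁅x r s c, x (Idx.neg r) (Idx.neg s) d⁆ := by
      rw [commutatorElement_def (x p q a)]
      exact ((m1.mul_left m2).mul_left m1.inv_left).mul_left m2.inv_left
    exact m3.eq.symm
  have hYE : YT x F G T1 ≤ Subgroup.centralizer (EE x (K.prod L)) :=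
    (YT_le F G T1).trans t2
  rw [Subgroup.le_centralizer_iff] at hYY hYE ⊢
  exact (S.comm_le hn K L h2).trans (sup_le hYY hYE)

theorem main_eq (S : St D n x) (hn : 3 ≤ n) (F G K L : FormIdeal D)
    {T1 T2 : Set (Idx n × Idx n)} (h1 : Full F G T1) (h2 : Full K L T2)
    (hd : ∀ p q r s, (p, q) ∈ T1 → (r, s) ∈ T2 → p.1 ≠ r.1 ∧ p.1 ≠ s.1 ∧ q.1 ≠ r.1 ∧ q.1 ≠ s.1) :
    ⁅⁅EE x F, EE x G⁆, ⁅EE x K, EE x L⁆⁆ = ⁅EE x (F.prod G), EE x (K.prod L)⁆ := by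
  apply le_antisymm
  · set W := ⁅EE x (F.prod G), EE x (K.prod L)⁆ with hW
    haveI : W.Normal := by rw [hW]; infer_instance
    have hs := QuotientGroup.mk'_surjective W
    have hq := (S.map _ hs).quad hn F G K L h1 h2 hd (by
      rw [comm_mp _ hs, ← hW, Subgroup.map_eq_bot_iff, QuotientGroup.ker_mk'])
    rw [comm_mp _ hs, comm_mp _ hs, ← Subgroup.map_commutator, Subgroup.map_eq_bot_iff,
      QuotientGroup.ker_mk'] at hq
    exact hq
  · exact Subgroup.commutator_mono (S.prod_le hn F G) (S.prod_le hn K L)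

theorem main_all (S : St D n x) (F G K L : FormIdeal D)
    (hn : 4 ≤ n ∨ (3 ≤ n ∧
      (F.Gamma = F.I ∨ G.Gamma = G.I ∨ K.Gamma = K.I ∨ L.Gamma = L.I))) :
    ⁅⁅EE x F, EE x G⁆, ⁅EE x K, EE x L⁆⁆ = ⁅EE x (F.prod G), EE x (K.prod L)⁆ := by
  have hn3 : 3 ≤ n := by omega
  let e : ∀ k : ℕ, k < n → Idx n := fun k hk => (⟨k, hk⟩, true)
  have ful : ∀ (F G : FormIdeal D) (k l : ℕ) (hk : k < n) (hl : l < n), k ≠ l →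
      Full F G {(e k hk, e l hl), (e k hk, e k hk)} := by
    intro F G k l hk hl hkl
    refine ⟨⟨e k hk, by simp⟩, Or.inl ⟨e k hk, e l hl, ?_, ?_, by simp⟩⟩
    · simp [e, hkl]
    · simp [e, Idx.neg]
  have one : ∀ (F G : FormIdeal D) (k : ℕ) (hk : k < n), F.Gamma = F.I ∨ G.Gamma = G.I →
      Full F G {(e k hk, e k hk)} := by
    intro F G k hk h
    exact ⟨⟨e k hk, by simp⟩, Or.inr h⟩
  rcases hn with hn | ⟨hn, h⟩
  · refine S.main_eq hn3 F G K L (ful F G 0 1 (by omega) (by omega) (by omega))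
      (ful K L 2 3 (by omega) (by omega) (by omega)) ?_
    intro p q r s h1 h2
    simp only [Set.mem_insert_iff, Set.mem_singleton_iff, Prod.mk.injEq] at h1 h2
    rcases h1 with ⟨rfl, rfl⟩ | ⟨rfl, rfl⟩ <;> rcases h2 with ⟨rfl, rfl⟩ | ⟨rfl, rfl⟩ <;>
      simp [e]
  · by_cases hFG : F.Gamma = F.I ∨ G.Gamma = G.I
    · refine S.main_eq hn3 F G K L (one F G 0 (by omega) hFG)
        (ful K L 1 2 (by omega) (by omega) (by omega)) ?_
      intro p q r s h1 h2
      simp only [Set.mem_insert_iff, Set.mem_singleton_iff, Prod.mk.injEq] at h1 h2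
      rcases h1 with ⟨rfl, rfl⟩ <;> rcases h2 with ⟨rfl, rfl⟩ | ⟨rfl, rfl⟩ <;>
        simp [e]
    · refine S.main_eq hn3 F G K L (ful F G 1 2 (by omega) (by omega) (by omega))
        (one K L 0 (by omega) (by tauto)) ?_
      intro p q r s h1 h2
      simp only [Set.mem_insert_iff, Set.mem_singleton_iff, Prod.mk.injEq] at h1 h2
      rcases h1 with ⟨rfl, rfl⟩ | ⟨rfl, rfl⟩ <;> rcases h2 with ⟨rfl, rfl⟩ <;>
        simp [e]

end St
namespace FormRingData

variable {A : Type*} [Ring A] {n : ℕ}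

theorem transvGen_eq (D : FormRingData A) (F : FormIdeal D) :
    D.transvGen n F.I F.Gamma = St.gens (fun i j a => D.xg (n := n) i j a) F := by
  ext s
  constructor
  · rintro (⟨i, j, hij, hij', c, hc, rfl⟩ | ⟨i, g, hg, rfl⟩)
    · have h : i ≠ Idx.neg j := hij'
      refine ⟨i, Idx.neg j, D.bar (D.w i) * c, by rwa [Idx.neg_neg], ?_, ?_⟩
      · rw [F.lev_short h]; exact F.mul_mem_left _ _ hc
      · simp only [xg, if_neg h]
        rw [Idx.neg_neg, ← mul_assoc, D.w_bw, one_mul]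
    · refine ⟨i, i, g, (Idx.neg_ne i).symm, (F.lev_long _ _).2 hg, ?_⟩
      simp only [xg, if_true, D.lpow_w]
  · rintro ⟨i, j, a, hij, ha, rfl⟩
    by_cases h : i = j
    · subst h
      refine Or.inr ⟨i, a, (F.lev_long _ _).1 ha, ?_⟩
      simp only [xg, if_true, D.lpow_w]
    · refine Or.inl ⟨i, Idx.neg j, hij, by rwa [Idx.neg_neg], D.w i * a,
        F.mul_mem_left _ _ ((F.lev_short h _).1 ha), ?_⟩
      simp only [xg, if_neg h]

theorem xg_mem (D : FormRingData A) {i j : Idx n} {a : A} (h : i ≠ Idx.neg j)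
    (ha : (FormIdeal.top D).lev i j a) : D.xg i j a ∈ D.EUmax n := by
  apply Subgroup.subset_closure
  have := D.transvGen_eq (n := n) (FormIdeal.top D)
  change D.transvGen n ⊤ D.Lambda = _ at this
  rw [this]
  exact ⟨i, j, a, h, ha, rfl⟩

open Classical in
/-- root elements in the absolute elementary group -/
noncomputable def xs (D : FormRingData A) (i j : Idx n) (a : A) : D.EUmax n :=
  if h : D.xg i j a ∈ D.EUmax n then ⟨D.xg i j a, h⟩ else 1

theorem xs_coe (D : FormRingData A) {i j : Idx n} {a : A} (h : i ≠ Idx.neg j)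
    (ha : (FormIdeal.top D).lev i j a) : (D.xs i j a : GLn A n) = D.xg i j a := by
  rw [xs, dif_pos (D.xg_mem h ha)]

theorem xs_short (D : FormRingData A) {i j : Idx n} {a : A} (h0 : i ≠ j) (h : i ≠ Idx.neg j) :
    (D.xs i j a : GLn A n) = D.xg i j a := D.xs_coe h (FormIdeal.lev_top_short h0 a)

theorem xs_long (D : FormRingData A) {i : Idx n} {a : A} (h0 : a ∈ D.Lambda) :
    (D.xs i i a : GLn A n) = D.xg i i a :=
  D.xs_coe (Idx.neg_ne i).symm ((FormIdeal.lev_long _ _ _).2 h0)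

theorem coe_comm {G : Type*} [Group G] {K : Subgroup G} (a b : K) :
    ((⁅a, b⁆ : K) : G) = ⁅(a : G), (b : G)⁆ := map_commutatorElement K.subtype a b

theorem st_xs (D : FormRingData A) : St D n (fun i j a => D.xs (n := n) i j a) where
  gen := by
    have e := D.transvGen_eq (n := n) (FormIdeal.top D)
    change D.transvGen n ⊤ D.Lambda = _ at e
    have h := Subgroup.closure_closure_coe_preimage (k := D.transvGen n ⊤ D.Lambda)
    change Subgroup.closure ((fun y : D.EUmax n => (y : GLn A n)) ⁻¹' _) = ⊤ at h
    rw [← h]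
    congr 1
    ext s
    rw [Set.mem_preimage, e]
    constructor
    · rintro ⟨i, j, a, hij, ha, rfl⟩
      exact ⟨i, j, a, hij, ha, D.xs_coe hij ha⟩
    · rintro ⟨i, j, a, hij, ha, hs⟩
      exact ⟨i, j, a, hij, ha, Subtype.ext (hs.trans (D.xs_coe hij ha).symm)⟩
  add := fun {i j} h a b ha hb => by
    apply Subtype.ext
    rw [Subgroup.coe_mul, D.xs_coe h ha, D.xs_coe h hb, D.xs_coe h (St.lev_add _ ha hb),
      D.xg_add h]
  sym := fun {i j} h1 h2 a => by
    apply Subtype.ext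
    rw [D.xs_short h1 h2, D.xs_short h1.symm (Idx.ne_comm_neg h2), D.xg_sym h1 h2]
  comm := fun {i j k l} h1 h2 h3 h4 h5 h6 a b ha hb => by
    apply Subtype.ext
    rw [Subgroup.coe_mul, Subgroup.coe_mul, D.xs_coe h1 ha, D.xs_coe h2 hb]
    exact D.xg_comm h1 h2 h3 h4 h5 h6 a b
  r3 := fun {i j l} h1 h2 h3 h4 h5 h6 a b => by
    apply Subtype.ext
    have nn := fun i : Idx n => Idx.neg_neg i
    rw [coe_comm, D.xs_short h1 h2, D.xs_short (by grind) (by grind), D.xs_short h5 h6,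
      D.xg_r3 h1 h2 h3 h4 h5 h6]
  r4 := fun {i j} h1 h2 a b => by
    apply Subtype.ext
    have nn := fun i : Idx n => Idx.neg_neg i
    rw [coe_comm, D.xs_short h1 h2, D.xs_short (by grind) (by grind),
      D.xs_long (D.lambdaMin_mem _), D.xg_r4 h1 h2]
  r5 := fun {j l} h1 h2 g b hg => by
    apply Subtype.ext
    have nn := fun i : Idx n => Idx.neg_neg i
    have hl : -(D.bar b * g * b) ∈ D.Lambda := by
      have := D.lambda_conj (D.bar b) g hg
      rw [D.bar_bar] at this
      exact neg_mem this
    rw [coe_comm, Subgroup.coe_mul, D.xs_long hg, D.xs_short (by grind) (by grind),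
      D.xs_short (by grind) (by grind), D.xs_long hl, D.xg_r5 h1 h2 g b hg]

theorem EU_eq (D : FormRingData A) (F : FormIdeal D) : D.EU n F.I F.Gamma =
    (St.EE (fun i j a => D.xs (n := n) i j a) F).map (D.EUmax n).subtype := by
  unfold EU St.EE Subgroup.normalClosure
  rw [MonoidHom.map_closure, D.transvGen_eq]
  congr 1
  ext s
  constructor
  · rintro ⟨g, hg, t, ⟨i, j, a, hij, ha, rfl⟩, rfl⟩
    refine ⟨⟨g, hg⟩ * D.xs i j a * ⟨g, hg⟩⁻¹, ?_, ?_⟩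
    · rw [Group.mem_conjugatesOfSet_iff]
      exact ⟨_, ⟨i, j, a, hij, ha, rfl⟩, isConj_iff.2 ⟨⟨g, hg⟩, rfl⟩⟩
    · simp [D.xs_coe hij (F.lev_top ha)]
  · rintro ⟨t, ht, rfl⟩
    obtain ⟨y, ⟨i, j, a, hij, ha, rfl⟩, hc⟩ := Group.mem_conjugatesOfSet_iff.1 ht
    obtain ⟨g, rfl⟩ := isConj_iff.1 hc
    refine ⟨g, g.2, _, ⟨i, j, a, hij, ha, rfl⟩, ?_⟩
    simp [D.xs_coe hij (F.lev_top ha)]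

end FormRingData

/-- Lemma 15 (quadruple commutators): for `n ≥ 4`, or `n ≥ 3` when one of the
ideals equals its relative form parameter,
`[[EU(I,Γ),EU(J,Δ)],[EU(K,Θ),EU(L,Ξ)]] = [EU((I,Γ)∘(J,Δ)), EU((K,Θ)∘(L,Ξ))]`. -/
theorem statement18 {A : Type*} [Ring A] (D : FormRingData A) (n : ℕ)
    (FI FJ FK FL : FormIdeal D)
    (hn : 4 ≤ n ∨ (3 ≤ n ∧
      (FI.Gamma = FI.I ∨ FJ.Gamma = FJ.I ∨ FK.Gamma = FK.I ∨ FL.Gamma = FL.I))) :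
    ⁅⁅D.EU n FI.I FI.Gamma, D.EU n FJ.I FJ.Gamma⁆,
        ⁅D.EU n FK.I FK.Gamma, D.EU n FL.I FL.Gamma⁆⁆ =
      ⁅D.EUsym n FI.I FI.Gamma FJ.I FJ.Gamma,
        D.EUsym n FK.I FK.Gamma FL.I FL.Gamma⁆ := by
  have h := (D.st_xs (n := n)).main_all FI FJ FK FL hn
  have h2 := congrArg (Subgroup.map (D.EUmax n).subtype) h
  simp only [Subgroup.map_commutator, ← D.EU_eq] at h2
  exact h2
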